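/- arXiv:1403.7342 — 2 statements merged into one kernel-verified Lean document; each statement's English description precedes it below -/
import Mathlib

section
/- Let x ∈ ℚ_P and let N ∈ ℕ. Then there exist β, γ ∈ P⁻¹ℤ with γ > 0 and ℓ(γ) ≤ N such that d(γ·x, ι(β)) ≤ M/N, where M = max{p_1, …, p_r} and γ·x denotes coordinatewise multiplication of x by (the image of) γ. -/
open MeasureTheory Filter Set

noncomputable section

/-- Borel measurable structure on `ℚ_[q]`. -/
instance (q : ℕ) [Fact q.Prime] : MeasurableSpace ℚ_[q] := borel _
instance (q : ℕ) [Fact q.Prime] : BorelSpace ℚ_[q] := ⟨rfl⟩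

/-- The normalized Haar measure on `ℚ_[q]`, giving the unit ball `ℤ_[q]` measure 1. -/
def padicHaar (q : ℕ) [Fact q.Prime] : Measure ℚ_[q] :=
  Measure.addHaarMeasure
    ⟨⟨Metric.closedBall 0 1, isCompact_closedBall 0 1⟩,
      ⟨0, mem_interior_iff_mem_nhds.2 (Metric.closedBall_mem_nhds 0 one_pos)⟩⟩

variable (r : ℕ) (p : Fin r → ℕ) [∀ i, Fact (p i).Prime]

/-- The space `ℚ_P = ℝ × ℚ_{p_1} × ⋯ × ℚ_{p_r}`. -/
abbrev QP : Type := ℝ × ((i : Fin r) → ℚ_[p i])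

/-- `P⁻¹ℤ = { n p_1^{ν_1} ⋯ p_r^{ν_r} : n, ν_i ∈ ℤ }`, as a set of rationals. -/
def PinvZ : Set ℚ :=
  {q : ℚ | ∃ (n : ℤ) (ν : Fin r → ℤ), q = (n : ℚ) * ∏ i, (p i : ℚ) ^ (ν i)}

/-- The diagonal embedding `ι : ℚ → ℚ_P`. -/
def iota (q : ℚ) : QP r p := ((q : ℝ), fun i => (q : ℚ_[p i]))

/-- Coordinatewise multiplication of `x ∈ ℚ_P` by a rational number `γ`. -/
def smulQ (γ : ℚ) (x : QP r p) : QP r p :=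
  ((γ : ℝ) * x.1, fun i => (γ : ℚ_[p i]) * x.2 i)

/-- The distance `d(x,y) = max_{p ∈ P} |x_p - y_p|_p` on `ℚ_P`. -/
def dP (x y : QP r p) : ℝ :=
  max |x.1 - y.1| (⨆ i, ‖x.2 i - y.2 i‖)

/-- The level `ℓ(γ) = max_{p ∈ P} |γ|_p` of a rational number `γ`. -/
def lev (γ : ℚ) : ℝ :=
  max |(γ : ℝ)| (⨆ i, ‖(γ : ℚ_[p i])‖)

/-- `L(γ) = max_{p ∈ P} (|γ|_∞ |γ|_{p_1} ⋯ |γ|_{p_r}) / |γ|_p` (which equals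
`max_{p ∈ P} n/|γ|_p` for `γ = n p_1^{ν_1} ⋯ p_r^{ν_r}` with `n ∈ ℕ` coprime to the `p i`). -/
def LP (γ : ℚ) : ℝ :=
  max ((|(γ : ℝ)| * ∏ i, ‖(γ : ℚ_[p i])‖) / |(γ : ℝ)|)
    (⨆ i, (|(γ : ℝ)| * ∏ j, ‖(γ : ℚ_[p j])‖) / ‖(γ : ℚ_[p i])‖)

/-- The fundamental domain `ℤ_P = [0,1) × ℤ_{p_1} × ⋯ × ℤ_{p_r}`. -/
def ZP : Set (QP r p) :=
  {x : QP r p | x.1 ∈ Set.Ico (0 : ℝ) 1 ∧ ∀ i, ‖x.2 i‖ ≤ 1}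

/-- The measure `λ` on `ℚ_P`: the product of Lebesgue measure on `ℝ` and the
normalized Haar measures on the `ℚ_{p_i}`. -/
def lamP : Measure (QP r p) :=
  (volume : Measure ℝ).prod (Measure.pi fun i => padicHaar (p i))

/-- Two elements of `P⁻¹ℤ` are coprime if they admit decompositions
`β = m p_1^{μ_1} ⋯ p_r^{μ_r}`, `γ = n p_1^{ν_1} ⋯ p_r^{ν_r}` with `m, n` coprime to all the
`p i` and `gcd(m,n) = 1`. -/
def CoprimePair (β γ : ℚ) : Prop :=
  ∃ (m n : ℤ) (μ ν : Fin r → ℤ),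
    β = (m : ℚ) * ∏ i, (p i : ℚ) ^ (μ i) ∧
    γ = (n : ℚ) * ∏ i, (p i : ℚ) ^ (ν i) ∧
    (∀ i, ¬ ((p i : ℤ) ∣ m)) ∧ (∀ i, ¬ ((p i : ℤ) ∣ n)) ∧ IsCoprime m n

/-- For nonzero `γ = n p_1^{ν_1} ⋯ p_r^{ν_r} ∈ P⁻¹ℤ` with `n ∈ ℕ` coprime to the `p i`,
`unitPart γ = n`: the positive integer obtained from `γ` by removing all powers of the `p i`. -/
def unitPart (γ : ℚ) : ℕ :=
  (γ.num.natAbs * γ.den) / ∏ i, (p i) ^ ((γ.num.natAbs * γ.den).factorization (p i))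

/-- The summand `φ(n) ψ(γ)^{r+1} / n`, where `γ = n p_1^{ν_1} ⋯ p_r^{ν_r}` with `n ∈ ℕ`
coprime to the `p i` and `φ` is Euler's totient function. -/
def dsWeight (ψ : ℚ → ℝ) (γ : ℚ) : ℝ :=
  (Nat.totient (unitPart r p γ) : ℝ) * ψ γ ^ (r + 1) / (unitPart r p γ : ℝ)

/-- The set `𝒜(ψ)` of `x ∈ ℤ_P` such that `d(γ·x, ι(β)) < ψ(γ)` for infinitely many coprime
pairs `β, γ ∈ P⁻¹ℤ`. -/
def Apsi (ψ : ℚ → ℝ) : Set (QP r p) :=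
  {x : QP r p | x ∈ ZP r p ∧
    {bg : ℚ × ℚ | bg.1 ∈ PinvZ r p ∧ bg.2 ∈ PinvZ r p ∧ CoprimePair r p bg.1 bg.2 ∧
      dP r p (smulQ r p bg.2 x) (iota r p bg.1) < ψ bg.2}.Infinite}

/-- The set `ℰ(ψ)` of `x ∈ ℤ_P` such that `d(γ·x, ι(β)) ≤ ψ(γ)` for infinitely many coprime
pairs `β, γ ∈ P⁻¹ℤ`. -/
def Epsi (ψ : ℚ → ℝ) : Set (QP r p) :=
  {x : QP r p | x ∈ ZP r p ∧
    {bg : ℚ × ℚ | bg.1 ∈ PinvZ r p ∧ bg.2 ∈ PinvZ r p ∧ CoprimePair r p bg.1 bg.2 ∧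
      dP r p (smulQ r p bg.2 x) (iota r p bg.1) ≤ ψ bg.2}.Infinite}

/-- The union of boxes
`⋃_{a=1, (a,m)=1}^{m} B_∞(a/m, ρ/(m p_1^{μ_1} ⋯ p_r^{μ_r})) × ∏_i B_{p_i}(a/m, p_i^{μ_i} ρ)`,
associated to `β = m p_1^{μ_1} ⋯ p_r^{μ_r}` and radius parameter `ρ = ψ(β)`. -/
def Abox (m : ℕ) (μ : Fin r → ℤ) (ρ : ℝ) : Set (QP r p) :=
  ⋃ a ∈ Finset.filter (fun a => Nat.Coprime a m) (Finset.Icc 1 m),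
    {x : QP r p |
      x.1 ∈ Metric.ball ((a : ℝ) / (m : ℝ)) (ρ / ((m : ℝ) * ∏ i, (p i : ℝ) ^ (μ i))) ∧
      ∀ i, x.2 i ∈ Metric.ball ((((a : ℚ) / (m : ℚ)) : ℚ_[p i])) ((p i : ℝ) ^ (μ i) * ρ)}

/-- A box in `ℚ_P`: a product of a ball from each of the constituent spaces. -/
def IsBox (S : Set (QP r p)) : Prop :=
  ∃ (c : ℝ) (ρ : ℝ) (cp : (i : Fin r) → ℚ_[p i]) (ρp : Fin r → ℝ),
    S = {x : QP r p | x.1 ∈ Metric.ball c ρ ∧ ∀ i, x.2 i ∈ Metric.ball (cp i) (ρp i)}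

end
theorem aux_normprod {r : ℕ} (p : Fin r → ℕ) [∀ i, Fact (p i).Prime]
    (hinj : Function.Injective p) (e : Fin r → ℕ) (i : Fin r) :
    ‖((∏ j, p j ^ e j : ℕ) : ℚ_[p i])‖ = ((p i : ℝ) ^ e i)⁻¹ := by
  push_cast
  rw [norm_prod, Finset.prod_eq_single i]
  · rw [norm_pow, Padic.norm_p, inv_pow]
  · intro j _ hj
    rw [norm_pow]
    have : ‖((p j : ℕ) : ℚ_[p i])‖ = 1 := by
      rw [Padic.norm_natCast_eq_one_iff]
      exact (Nat.coprime_primes (Fact.out : (p i).Prime) (Fact.out : (p j).Prime)).2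
        (fun h => hj (hinj h).symm)
    rw [this, one_pow]
  · simp

theorem aux_approx {r : ℕ} (p : Fin r → ℕ) [∀ i, Fact (p i).Prime]
    (hinj : Function.Injective p) (y : (i : Fin r) → ℚ_[p i]) (K : Fin r → ℕ) :
    ∃ (m : ℕ) (n : ℕ), ∀ i,
      ‖y i - (n : ℚ_[p i]) / ((∏ j, p j ^ m : ℕ) : ℚ_[p i])‖ ≤ ((p i : ℝ) ^ K i)⁻¹ := by
  have h1 : ∀ i, ∃ m : ℕ, ‖y i‖ ≤ (p i : ℝ) ^ m := by
    intro i
    have : (1 : ℝ) < p i := by exact_mod_cast (Fact.out : (p i).Prime).one_lt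
    obtain ⟨m, hm⟩ := pow_unbounded_of_one_lt ‖y i‖ this
    exact ⟨m, hm.le⟩
  choose m0 hm0 using h1
  set m := Finset.univ.sup m0 with hm
  set E : ℕ := ∏ j, p j ^ m with hE
  have hEn : ∀ i, ‖(E : ℚ_[p i])‖ = ((p i : ℝ) ^ m)⁻¹ := fun i => aux_normprod p hinj (fun _ => m) i
  have hp0 : ∀ i, (0 : ℝ) < p i := fun i => by exact_mod_cast (Fact.out : (p i).Prime).pos
  have hp1 : ∀ i, (1 : ℝ) ≤ p i := fun i => by exact_mod_cast (Fact.out : (p i).Prime).one_le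
  have hint : ∀ i, ‖(E : ℚ_[p i]) * y i‖ ≤ 1 := by
    intro i
    rw [norm_mul, hEn, inv_mul_le_one₀ (pow_pos (hp0 i) _)]
    exact (hm0 i).trans (pow_le_pow_right₀ (hp1 i) (Finset.le_sup (Finset.mem_univ i)))
  obtain ⟨n, hn⟩ := Nat.chineseRemainderOfFinset
    (fun i => PadicInt.appr (⟨(E : ℚ_[p i]) * y i, hint i⟩ : ℤ_[p i]) (K i + m))
    (fun i => p i ^ (K i + m)) Finset.univ
    (fun i _ => pow_ne_zero _ (Fact.out : (p i).Prime).ne_zero)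
    (fun i _ j _ hij => Nat.Coprime.pow _ _ ((Nat.coprime_primes (Fact.out : (p i).Prime)
      (Fact.out : (p j).Prime)).2 (fun h => hij (hinj h))))
  refine ⟨m, n, fun i => ?_⟩
  have hni := hn i (Finset.mem_univ i)
  set z : ℤ_[p i] := ⟨(E : ℚ_[p i]) * y i, hint i⟩ with hz
  set a := PadicInt.appr z (K i + m) with ha
  have h2 : ‖z - (a : ℤ_[p i])‖ ≤ (p i : ℝ) ^ (-((K i + m : ℕ) : ℤ)) :=
    ((z - (a : ℤ_[p i])).norm_le_pow_iff_mem_span_pow _).2 (PadicInt.appr_spec _ z)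
  have h2' : ‖(E : ℚ_[p i]) * y i - (a : ℚ_[p i])‖ ≤ (p i : ℝ) ^ (-((K i + m : ℕ) : ℤ)) := by
    rw [PadicInt.norm_def, PadicInt.coe_sub, PadicInt.coe_natCast] at h2
    exact h2
  have h3 : ‖(((a : ℤ) - (n : ℤ) : ℤ) : ℚ_[p i])‖ ≤ (p i : ℝ) ^ (-((K i + m : ℕ) : ℤ)) := by
    rw [Padic.norm_int_le_pow_iff_dvd]
    have := (Nat.modEq_iff_dvd).1 hni
    exact_mod_cast this
  have h4 : ‖(E : ℚ_[p i]) * y i - (n : ℚ_[p i])‖ ≤ (p i : ℝ) ^ (-((K i + m : ℕ) : ℤ)) := by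
    have : (E : ℚ_[p i]) * y i - (n : ℚ_[p i]) =
      ((E : ℚ_[p i]) * y i - (a : ℚ_[p i])) + (((a : ℤ) - (n : ℤ) : ℤ) : ℚ_[p i]) := by
      push_cast; ring
    rw [this]
    exact (Padic.nonarchimedean _ _).trans (max_le h2' h3)
  have hE0 : (E : ℚ_[p i]) ≠ 0 := by
    rw [← norm_ne_zero_iff, hEn]
    exact inv_ne_zero (pow_pos (hp0 i) _).ne'
  have h5 : y i - (n : ℚ_[p i]) / (E : ℚ_[p i]) = ((E : ℚ_[p i]) * y i - n) / E := by
    field_simp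
  rw [h5, norm_div, hEn, div_inv_eq_mul]
  rw [zpow_neg, zpow_natCast, pow_add, mul_inv] at h4
  have hpm := pow_pos (hp0 i) m
  calc _ ≤ _ := mul_le_mul_of_nonneg_right h4 hpm.le
    _ = _ := by field_simp

/-- **Dirichlet's theorem in the diagonal setting.**
For any `x ∈ ℚ_P` and `N ∈ ℕ`, there exist `β, γ ∈ P⁻¹ℤ` with `γ > 0` and `ℓ(γ) ≤ N`
such that `d(γ·x, ι(β)) ≤ M/N`, where `M = max {p_1, …, p_r}`. -/
theorem diagonal_dirichlet (r : ℕ) (hr : 0 < r) (p : Fin r → ℕ)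
    [∀ i, Fact (p i).Prime] (hinj : Function.Injective p)
    (x : QP r p) (N : ℕ) (hN : 0 < N) :
    ∃ β ∈ PinvZ r p, ∃ γ ∈ PinvZ r p, 0 < γ ∧ lev r p γ ≤ (N : ℝ) ∧
      dP r p (smulQ r p γ x) (iota r p β) ≤ ((Finset.univ.sup p : ℕ) : ℝ) / (N : ℝ) := by
  have hp0 : ∀ i, (0 : ℝ) < p i := fun i => by exact_mod_cast (Fact.out : (p i).Prime).pos
  set k : Fin r → ℕ := fun i => Nat.log (p i) N with hk
  have hk1 : ∀ i, (p i : ℝ) ^ k i ≤ N := fun i => by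
    exact_mod_cast Nat.pow_log_le_self (p i) hN.ne'
  have hk2 : ∀ i, (N : ℝ) ≤ (p i : ℝ) ^ k i * p i := fun i => by
    have := Nat.lt_pow_succ_log_self (Fact.out : (p i).Prime).one_lt N
    rw [pow_succ] at this
    exact_mod_cast this.le
  have hNR : (0 : ℝ) < N := by exact_mod_cast hN
  have hM : ∀ i, (p i : ℝ) ≤ ((Finset.univ.sup p : ℕ) : ℝ) := fun i => by
    exact_mod_cast Finset.le_sup (f := p) (Finset.mem_univ i)
  have hM1 : (1 : ℝ) ≤ ((Finset.univ.sup p : ℕ) : ℝ) :=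
    le_trans (by exact_mod_cast (Fact.out : (p ⟨0, hr⟩).Prime).one_le) (hM ⟨0, hr⟩)
  have hkM : ∀ i, ((p i : ℝ) ^ k i)⁻¹ ≤ ((Finset.univ.sup p : ℕ) : ℝ) / (N : ℝ) := fun i => by
    have h := pow_pos (hp0 i) (k i)
    rw [inv_eq_one_div, div_le_div_iff₀ h hNR, one_mul]
    calc _ ≤ _ := hk2 i
      _ ≤ _ := by rw [mul_comm]; exact mul_le_mul_of_nonneg_right (hM i) h.le
  obtain ⟨m, n, hn⟩ := aux_approx p hinj x.2 (fun i => 2 * k i)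
  set E : ℕ := ∏ j, p j ^ m with hE
  set D : ℕ := ∏ j, p j ^ k j with hD
  have hDn : ∀ i, ‖(D : ℚ_[p i])‖ = ((p i : ℝ) ^ k i)⁻¹ := fun i => aux_normprod p hinj k i
  have hD0 : 0 < D := Finset.prod_pos fun j _ => pow_pos (Fact.out : (p j).Prime).pos _
  have hE0 : 0 < E := Finset.prod_pos fun j _ => pow_pos (Fact.out : (p j).Prime).pos _
  have hDR : (0 : ℝ) < D := by exact_mod_cast hD0
  have hER : (0 : ℝ) < E := by exact_mod_cast hE0
  have hDQ : (0 : ℚ) < D := by exact_mod_cast hD0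
  have hEQ : (0 : ℚ) < E := by exact_mod_cast hE0
  have hinvprod : ∀ e : Fin r → ℕ, ∏ i, (p i : ℚ) ^ (-(e i : ℤ)) = (((∏ i, p i ^ e i : ℕ) : ℚ))⁻¹ := by
    intro e
    push_cast
    rw [← Finset.prod_inv_distrib]
    exact Finset.prod_congr rfl fun i _ => by rw [zpow_neg, zpow_natCast]
  obtain ⟨c, g, hg0, hg1, hcg⟩ := Real.exists_int_int_abs_mul_sub_le
    ((x.1 - (n : ℝ) / E) / (D : ℝ) ^ 2) (Nat.mul_pos hN hD0)
  have hgQ : (0 : ℚ) < g := by exact_mod_cast hg0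
  refine ⟨(g : ℚ) / D * (n / E) + D * c, ?_, (g : ℚ) / D, ?_, by positivity, ?_, ?_⟩
  · refine ⟨g * n + D * D * E * c, fun i => -((k i + m : ℕ) : ℤ), ?_⟩
    rw [hinvprod]
    have : (∏ i, p i ^ (k i + m) : ℕ) = D * E := by
      rw [hD, hE, ← Finset.prod_mul_distrib]
      exact Finset.prod_congr rfl fun i _ => pow_add _ _ _
    rw [this]
    push_cast
    field_simp
  · refine ⟨g, fun i => -((k i : ℕ) : ℤ), ?_⟩
    rw [hinvprod, div_eq_mul_inv]
  · have : Nonempty (Fin r) := ⟨⟨0, hr⟩⟩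
    refine max_le ?_ (ciSup_le fun i => ?_)
    · push_cast
      have hgR : (0 : ℝ) < g := by exact_mod_cast hg0
      rw [abs_of_pos (by positivity), div_le_iff₀ hDR]
      exact_mod_cast hg1
    · push_cast
      rw [norm_div, hDn, div_inv_eq_mul]
      have h := pow_pos (hp0 i) (k i)
      calc _ ≤ 1 * (p i : ℝ) ^ k i :=
            mul_le_mul_of_nonneg_right (Padic.norm_int_le_one g) h.le
        _ ≤ _ := by rw [one_mul]; exact hk1 i
  · have : Nonempty (Fin r) := ⟨⟨0, hr⟩⟩
    refine max_le ?_ (ciSup_le fun i => ?_)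
    · simp only [smulQ, iota]
      push_cast
      have h1 : (g : ℝ) / D * x.1 - ((g : ℝ) / D * (n / E) + D * c) =
          D * (g * ((x.1 - (n : ℝ) / E) / (D : ℝ) ^ 2) - c) := by
        field_simp
        ring
      rw [h1, abs_mul, abs_of_pos hDR]
      calc _ ≤ (D : ℝ) * (1 / (((N * D : ℕ) : ℝ) + 1)) := mul_le_mul_of_nonneg_left hcg hDR.le
        _ ≤ 1 / N := by
          push_cast
          rw [mul_one_div, div_le_div_iff₀ (by positivity) hNR]
          nlinarith
        _ ≤ _ := div_le_div_of_nonneg_right hM1 hNR.le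
    · refine le_trans ?_ (hkM i)
      simp only [smulQ, iota]
      push_cast
      have h1 : (g : ℚ_[p i]) / D * x.2 i - ((g : ℚ_[p i]) / D * (n / E) + D * c) =
          (g : ℚ_[p i]) / D * (x.2 i - n / E) + -(D * c) := by ring
      rw [h1]
      have h := pow_pos (hp0 i) (k i)
      refine (Padic.nonarchimedean _ _).trans (max_le ?_ ?_)
      · rw [norm_mul, norm_div, hDn, div_inv_eq_mul]
        calc _ ≤ (1 * (p i : ℝ) ^ k i) * ((p i : ℝ) ^ (2 * k i))⁻¹ :=
              mul_le_mul (mul_le_mul_of_nonneg_right (Padic.norm_int_le_one g) h.le) (hn i)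
                (norm_nonneg _) (by positivity)
          _ = _ := by rw [two_mul, pow_add]; field_simp
      · rw [norm_neg, norm_mul, hDn]
        exact mul_le_of_le_one_right (by positivity) (Padic.norm_int_le_one c)
end

section
/- Let ψ : P⁻¹ℤ → ℝ_{≥0} satisfy ψ(γ) ≤ 1/(2 L(γ)) for all γ. If Σ_{γ ∈ P⁻¹ℤ} φ(n) ψ(γ)^{r+1} / n = ∞ (where γ = n p_1^{ν_1} ⋯ p_r^{ν_r} and φ is Euler's totient function) and limsup_{N → ∞} ( Σ_{ℓ(γ) ≤ N} φ(n) ψ(γ)^{r+1} / n ) / ( Σ_{ℓ(γ) ≤ N} ψ(γ)^{r+1} ) > 0, then the set 𝒜(ψ) = { x ∈ ℤ_P : d(γ·x, ι(β)) < ψ(γ) for infinitely many coprime pairs β, γ ∈ P⁻¹ℤ } has measure λ(𝒜(ψ)) = 1. -/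
open MeasureTheory Filter Set

section DSMeasure

open Topology Pointwise

instance padicHaar_isAddHaar (q : ℕ) [Fact q.Prime] : (padicHaar q).IsAddHaarMeasure := by
  unfold padicHaar; infer_instance

instance lamP_isAddHaar (r : ℕ) (p : Fin r → ℕ) [∀ i, Fact (p i).Prime] :
    (lamP r p).IsAddHaarMeasure := by
  unfold lamP; infer_instance

lemma padicHaar_one (q : ℕ) [Fact q.Prime] : padicHaar q (Metric.closedBall 0 1) = 1 := by
  unfold padicHaar
  exact Measure.addHaarMeasure_self

lemma padicHaar_closedBall (q : ℕ) [hq : Fact q.Prime] (k : ℕ) :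
    padicHaar q (Metric.closedBall 0 ((q : ℝ) ^ (-(k : ℤ)))) = ((q : ENNReal) ^ k)⁻¹ := by
  have hU : (Metric.closedBall (0 : ℚ_[q]) 1) =
      ⋃ j ∈ Finset.range (q ^ k), Metric.closedBall ((j : ℕ) : ℚ_[q]) ((q : ℝ) ^ (-(k : ℤ))) := by
    ext x
    rw [Metric.mem_closedBall, dist_zero_right, mem_iUnion₂]
    simp only [Metric.mem_closedBall, dist_eq_norm, exists_prop]
    constructor
    · intro hx
      refine ⟨PadicInt.appr (⟨x, hx⟩ : ℤ_[q]) k, Finset.mem_range.2 (PadicInt.appr_lt _ _), ?_⟩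
      have := (PadicInt.norm_le_pow_iff_mem_span_pow _ _).2 (PadicInt.appr_spec k (⟨x, hx⟩ : ℤ_[q]))
      rw [PadicInt.norm_def] at this
      exact this
    · rintro ⟨j, -, hj⟩
      have h1 : ‖x - j‖ ≤ 1 := hj.trans (by
        rw [zpow_neg, zpow_natCast]
        exact inv_le_one_of_one_le₀ (one_le_pow₀ (by exact_mod_cast hq.out.one_lt.le)))
      have h2 : ‖((j : ℕ) : ℚ_[q])‖ ≤ 1 := by
        simpa using Padic.norm_int_le_one (p := q) (j : ℤ)
      calc ‖x‖ = ‖(x - j) + j‖ := by ring_nf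
        _ ≤ max ‖x - j‖ ‖((j : ℕ) : ℚ_[q])‖ := Padic.nonarchimedean _ _
        _ ≤ 1 := max_le h1 h2
  have hm := padicHaar_one q
  rw [hU, measure_biUnion_finset] at hm
  · have : ∀ j ∈ Finset.range (q ^ k),
        padicHaar q (Metric.closedBall ((j : ℕ) : ℚ_[q]) ((q : ℝ) ^ (-(k : ℤ)))) =
        padicHaar q (Metric.closedBall 0 ((q : ℝ) ^ (-(k : ℤ)))) := by
      intro j _
      rw [← measure_preimage_add (padicHaar q) ((j : ℕ) : ℚ_[q])
        (Metric.closedBall ((j : ℕ) : ℚ_[q]) _), preimage_add_closedBall, sub_self]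
    rw [Finset.sum_congr rfl this, Finset.sum_const, Finset.card_range, nsmul_eq_mul] at hm
    push_cast at hm
    rw [mul_comm] at hm
    exact ENNReal.eq_inv_of_mul_eq_one_left hm
  · intro j hj j' hj' hne
    rw [Function.onFun, Set.disjoint_left]
    intro x hx hx'
    rw [Metric.mem_closedBall, dist_eq_norm] at hx hx'
    have h3 : ‖(((j : ℤ) - (j' : ℤ) : ℤ) : ℚ_[q])‖ ≤ (q : ℝ) ^ (-(k : ℤ)) := by
      have : (((j : ℤ) - (j' : ℤ) : ℤ) : ℚ_[q]) = (x - j') + (-(x - j)) := by push_cast; ring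
      rw [this]
      refine (Padic.nonarchimedean _ _).trans (max_le hx' ?_)
      rwa [norm_neg]
    rw [Padic.norm_int_le_pow_iff_dvd] at h3
    have h4 := Int.eq_zero_of_abs_lt_dvd h3 (by
      simp at hj hj'
      have a1 : (j : ℤ) < (q : ℤ) ^ k := by exact_mod_cast hj
      have a2 : (j' : ℤ) < (q : ℤ) ^ k := by exact_mod_cast hj'
      rw [abs_lt]; constructor <;> omega)
    omega
  · intro j _
    exact Metric.isClosed_closedBall.measurableSet

lemma padicHaar_ball (q : ℕ) [hq : Fact q.Prime] (x : ℚ_[q]) {δ : ℝ} (h0 : 0 < δ) (h1 : δ ≤ 1) :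
    ENNReal.ofReal (δ / q) ≤ padicHaar q (Metric.ball x δ) ∧
      padicHaar q (Metric.ball x δ) ≤ ENNReal.ofReal δ := by
  have hq1 : (1 : ℝ) < q := by exact_mod_cast hq.out.one_lt
  have hq0 : (0 : ℝ) < q := by linarith
  obtain ⟨k, hk1, hk2⟩ := exists_nat_pow_near_of_lt_one h0 h1 (inv_pos.2 hq0)
    (inv_lt_one_of_one_lt₀ hq1)
  have hm : padicHaar q (Metric.ball x δ) = ENNReal.ofReal (((q : ℝ)⁻¹) ^ (k + 1)) := by
    rw [← measure_preimage_add (padicHaar q) x (Metric.ball x δ), preimage_add_ball, sub_self]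
    have : Metric.ball (0 : ℚ_[q]) δ = Metric.closedBall 0 ((q : ℝ) ^ (-((k + 1 : ℕ) : ℤ))) := by
      ext y
      simp only [Metric.mem_ball, Metric.mem_closedBall, dist_zero_right]
      constructor
      · intro hy
        have : ‖y‖ < (q : ℝ) ^ (-(k : ℤ)) := by
          refine hy.trans_le (hk2.trans_eq ?_)
          simp
        rw [Padic.norm_lt_pow_iff_norm_le_pow_sub_one] at this
        refine this.trans_eq ?_
        congr 1; push_cast; ring
      · intro hy
        refine lt_of_le_of_lt hy (lt_of_eq_of_lt ?_ hk1)
        rw [zpow_neg, zpow_natCast, inv_pow]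
    rw [this, padicHaar_closedBall, inv_pow, ENNReal.ofReal_inv_of_pos (by positivity),
      ENNReal.ofReal_pow hq0.le, ENNReal.ofReal_natCast]
  rw [hm]
  refine ⟨ENNReal.ofReal_le_ofReal ?_, ENNReal.ofReal_le_ofReal hk1.le⟩
  rw [pow_succ, div_eq_mul_inv]
  exact mul_le_mul_of_nonneg_right hk2 (inv_nonneg.2 hq0.le)

variable {r : ℕ} {p : Fin r → ℕ} [∀ i, Fact (p i).Prime]

def dsBox (c : ℝ) (ρ : ℝ) (cp : (i : Fin r) → ℚ_[p i]) (ρp : Fin r → ℝ) : Set (QP r p) :=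
  {x : QP r p | x.1 ∈ Metric.ball c ρ ∧ ∀ i, x.2 i ∈ Metric.ball (cp i) (ρp i)}

lemma dsBox_eq (c : ℝ) (ρ : ℝ) (cp : (i : Fin r) → ℚ_[p i]) (ρp : Fin r → ℝ) :
    dsBox c ρ cp ρp = Metric.ball c ρ ×ˢ (Set.univ.pi fun i => Metric.ball (cp i) (ρp i)) := by
  ext x; simp [dsBox]

lemma dsBox_open (c : ℝ) (ρ : ℝ) (cp : (i : Fin r) → ℚ_[p i]) (ρp : Fin r → ℝ) :
    IsOpen (dsBox c ρ cp ρp) := by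
  rw [dsBox_eq]
  exact Metric.isOpen_ball.prod (isOpen_set_pi finite_univ fun i _ => Metric.isOpen_ball)

lemma dsBox_meas (c : ℝ) (ρ : ℝ) (cp : (i : Fin r) → ℚ_[p i]) (ρp : Fin r → ℝ)
    (h0 : 0 < ρ) (hp0 : ∀ i, 0 < ρp i) (hp1 : ∀ i, ρp i ≤ 1) :
    ENNReal.ofReal ((2 * ρ * ∏ i, ρp i) / ∏ i, (p i : ℝ)) ≤ lamP r p (dsBox c ρ cp ρp) ∧
    lamP r p (dsBox c ρ cp ρp) ≤ ENNReal.ofReal (2 * ρ * ∏ i, ρp i) := by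
  rw [dsBox_eq, lamP, Measure.prod_prod, Measure.pi_pi, Real.volume_ball]
  constructor
  · rw [mul_div_assoc, ENNReal.ofReal_mul (by positivity), ← Finset.prod_div_distrib,
      ENNReal.ofReal_prod_of_nonneg fun i _ => div_nonneg (hp0 i).le (Nat.cast_nonneg _)]
    gcongr with i
    exact (padicHaar_ball (p i) (cp i) (hp0 i) (hp1 i)).1
  · rw [ENNReal.ofReal_mul (p := 2 * ρ) (by positivity),
      ENNReal.ofReal_prod_of_nonneg fun i _ => (hp0 i).le]
    gcongr with i
    exact (padicHaar_ball (p i) (cp i) (hp0 i) (hp1 i)).2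

def dsSlab (r : ℕ) (p : Fin r → ℕ) [∀ i, Fact (p i).Prime] (a b : ℝ) : Set (QP r p) :=
  {x : QP r p | x.1 ∈ Set.Ico a b ∧ ∀ i, ‖x.2 i‖ ≤ 1}

lemma dsSlab_eq (a b : ℝ) : dsSlab r p a b =
    Set.Ico a b ×ˢ (Set.univ.pi fun i => Metric.closedBall (0 : ℚ_[p i]) 1) := by
  ext x; simp [dsSlab]

lemma ZP_eq : ZP r p = dsSlab r p 0 1 := rfl

lemma dsSlab_measurable (a b : ℝ) : MeasurableSet (dsSlab r p a b) := by
  rw [dsSlab_eq]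
  exact measurableSet_Ico.prod (MeasurableSet.univ_pi fun i => Metric.isClosed_closedBall.measurableSet)

lemma dsSlab_meas (a b : ℝ) : lamP r p (dsSlab r p a b) = ENNReal.ofReal (b - a) := by
  rw [dsSlab_eq, lamP, Measure.prod_prod, Measure.pi_pi, Real.volume_Ico]
  simp [padicHaar_one]

lemma ZP_meas : lamP r p (ZP r p) = 1 := by
  rw [ZP_eq, dsSlab_meas]; simp

lemma padic_norm_natCast_of_not_dvd (q : ℕ) [Fact q.Prime] (Q : ℕ) (h : ¬ q ∣ Q) :
    ‖(Q : ℚ_[q])‖ = 1 := by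
  rw [← Rat.cast_natCast, Padic.eq_padicNorm]
  have := padicNorm.nat_eq_one_iff (p := q) Q
  rw [this.2 h]; simp

/-- multiplication by `Q` as a continuous additive equivalence -/
noncomputable def dsMul (r : ℕ) (p : Fin r → ℕ) [∀ i, Fact (p i).Prime] (Q : ℚ) (hQ : Q ≠ 0) :
    QP r p ≃ₜ+ QP r p where
  toFun := smulQ r p Q
  invFun := smulQ r p Q⁻¹
  left_inv x := by
    ext i
    · simp [smulQ, hQ]
    · have : (Q : ℚ_[p i]) ≠ 0 := by exact_mod_cast hQ
      simp [smulQ, this]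
  right_inv x := by
    ext i
    · simp [smulQ, hQ]
    · have : (Q : ℚ_[p i]) ≠ 0 := by exact_mod_cast hQ
      simp [smulQ, this]
  map_add' x y := by
    ext i
    · simp [smulQ, mul_add]
    · simp [smulQ, mul_add]
  continuous_toFun := by unfold smulQ; fun_prop
  continuous_invFun := by unfold smulQ; fun_prop

lemma dsMul_meas (Q : ℕ) (hQ : Q ≠ 0) (hp : ∀ i, ¬ p i ∣ Q) (A : Set (QP r p)) 
    (hA : MeasurableSet A) :
    lamP r p (smulQ r p Q ⁻¹' A) = (Q : ENNReal)⁻¹ * lamP r p A := by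
  have hQ' : (Q : ℚ) ≠ 0 := by exact_mod_cast hQ
  have hQ0 : (0 : ℝ) < Q := by exact_mod_cast Nat.pos_of_ne_zero hQ
  set T := dsMul r p Q hQ' with hT
  have hTf : ⇑T = smulQ r p Q := rfl
  have hTc : Continuous (smulQ r p (Q : ℚ)) := T.continuous_toFun
  have : (Measure.map T (lamP r p)).IsAddHaarMeasure :=
    Measure.isAddHaarMeasure_map (lamP r p) (T : QP r p →+ QP r p) hTc T.surjective
      T.toHomeomorph.isClosedEmbedding.tendsto_cocompact
  have h1 := Measure.isAddLeftInvariant_eq_smul (Measure.map T (lamP r p)) (lamP r p)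
  have h2 : ∀ A, MeasurableSet A → lamP r p (smulQ r p Q ⁻¹' A) =
      ((Measure.map T (lamP r p)).addHaarScalarFactor (lamP r p) : ENNReal) * lamP r p A := by
    intro A hA
    have h3 := congrArg (fun μ : Measure (QP r p) => μ A) h1
    beta_reduce at h3
    rw [Measure.map_apply (f := ⇑T) hTc.measurable hA] at h3
    rw [← hTf, h3]; rfl
  have h4 := h2 (ZP r p) (by rw [ZP_eq]; exact dsSlab_measurable _ _)
  have h5 : smulQ r p (Q : ℚ) ⁻¹' (ZP r p) = dsSlab r p 0 ((Q : ℝ)⁻¹) := by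
    ext x
    have a1 : ∀ i, ‖(Q : ℚ_[p i])‖ = 1 := fun i => padic_norm_natCast_of_not_dvd _ _ (hp i)
    simp only [smulQ, ZP, dsSlab, mem_preimage, mem_ofPred_eq, mem_Ico, Rat.cast_natCast, norm_mul,
      a1, one_mul]
    rw [mul_nonneg_iff_of_pos_left hQ0, inv_eq_one_div, lt_div_iff₀' hQ0]
  rw [h5, dsSlab_meas, ZP_meas, mul_one, sub_zero, ENNReal.ofReal_inv_of_pos hQ0,
    ENNReal.ofReal_natCast] at h4
  rw [h2 A hA, h4]

lemma iota_add (a b : ℚ) : iota r p (a + b) = iota r p a + iota r p b := by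
  ext i <;> simp [iota]

lemma dsSlab_nat (F : Set (QP r p)) (hF : ∀ j : ℤ, ∀ x, x + iota r p j ∈ F ↔ x ∈ F) (Q : ℕ)
    (hFm : MeasurableSet F) :
    lamP r p (dsSlab r p 0 Q ∩ F) = Q * lamP r p (ZP r p ∩ F) := by
  induction Q with
  | zero => 
    have : dsSlab r p 0 ((0 : ℕ) : ℝ) = ∅ := by ext x; simp [dsSlab]
    rw [this]; simp
  | succ Q ih =>
    have h1 : dsSlab r p 0 ((Q + 1 : ℕ) : ℝ) ∩ F = 
        (dsSlab r p 0 Q ∩ F) ∪ (dsSlab r p Q (Q + 1) ∩ F) := by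
      rw [← union_inter_distrib_right]
      congr 1
      ext x
      simp only [dsSlab, mem_ofPred_eq, mem_union, mem_Ico, ← or_and_right]
      refine and_congr_left fun _ => ?_
      have : (0 : ℝ) ≤ Q := by positivity
      push_cast
      constructor
      · rintro ⟨a, b⟩
        rcases lt_or_ge x.1 Q with h | h
        · exact Or.inl ⟨a, h⟩
        · exact Or.inr ⟨h, b⟩
      · rintro (⟨a, b⟩ | ⟨a, b⟩) <;> constructor <;> linarith
    have h2 : lamP r p (dsSlab r p Q (Q + 1) ∩ F) = lamP r p (ZP r p ∩ F) := by
      rw [← measure_preimage_add_right (lamP r p) (iota r p (Q : ℤ))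
        (dsSlab r p Q (Q + 1) ∩ F)]
      congr 1
      ext x
      simp only [mem_preimage, mem_inter_iff, hF]
      refine and_congr_left fun _ => ?_
      simp only [dsSlab, ZP, iota, mem_ofPred_eq, mem_Ico, Prod.fst_add, Prod.snd_add, Pi.add_apply]
      refine and_congr ?_ (forall_congr' fun i => ?_)
      · push_cast
        constructor <;> rintro ⟨a, b⟩ <;> constructor <;> linarith
      · have hn : ‖((((Q : ℤ) : ℚ)) : ℚ_[p i])‖ ≤ 1 := by
          simpa using Padic.norm_int_le_one (p := p i) (Q : ℤ)
        constructor
        · intro h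
          have := (Padic.nonarchimedean (x.2 i + ((((Q : ℤ) : ℚ)) : ℚ_[p i])) (-((((Q : ℤ) : ℚ)) : ℚ_[p i])))
          rw [norm_neg, add_neg_cancel_right] at this
          exact this.trans (max_le h hn)
        · intro h
          exact (Padic.nonarchimedean _ _).trans (max_le h hn)
    rw [h1, measure_union _ ((dsSlab_measurable _ _).inter hFm), ih, h2]
    · push_cast; ring
    · rw [Set.disjoint_left]
      rintro x ⟨hx, -⟩ ⟨hx', -⟩
      exact absurd hx.1.2 (not_lt.2 hx'.1.1)

/-- multiplication by `Q` preserves the measure on the quotient -/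
lemma dsMul_preserve (Q : ℕ) (hQ : Q ≠ 0) (hp : ∀ i, ¬ p i ∣ Q) (F : Set (QP r p))
    (hF : ∀ j : ℤ, ∀ x, x + iota r p j ∈ F ↔ x ∈ F) (hFm : MeasurableSet F) :
    lamP r p (ZP r p ∩ smulQ r p Q ⁻¹' F) = lamP r p (ZP r p ∩ F) := by
  have hQ0 : (0 : ℝ) < Q := by exact_mod_cast Nat.pos_of_ne_zero hQ
  have h5 : ZP r p = smulQ r p (Q : ℚ) ⁻¹' (dsSlab r p 0 Q) := by
    ext x
    have a1 : ∀ i, ‖(Q : ℚ_[p i])‖ = 1 := fun i => padic_norm_natCast_of_not_dvd _ _ (hp i)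
    simp only [smulQ, ZP, dsSlab, mem_preimage, mem_ofPred_eq, mem_Ico, Rat.cast_natCast, norm_mul,
      a1, one_mul]
    rw [mul_nonneg_iff_of_pos_left hQ0, mul_lt_iff_lt_one_right hQ0]
  conv_lhs => rw [h5, ← preimage_inter]
  rw [dsMul_meas Q hQ hp _ ((dsSlab_measurable _ _).inter hFm), dsSlab_nat F hF Q hFm, ← mul_assoc,
    ENNReal.inv_mul_cancel (by exact_mod_cast hQ) (by simp), one_mul]

/-- zero-one law for a set invariant under a dense set of translations -/
lemma dsErg (E : Set (QP r p)) (hE : MeasurableSet E)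
    (hd : Dense {g : QP r p | (fun x => g + x) ⁻¹' E =ᵐ[lamP r p] E}) :
    EventuallyConst E (ae (lamP r p)) := by
  have key : ∀ g : QP r p, lamP r p (((fun x => g + x) ⁻¹' Eᶜ) ∩ E) = 0 := by
    intro g
    by_contra hne
    have hcont : Continuous (fun x : QP r p => g + x) := by fun_prop
    obtain ⟨K, hKs, hK, hK0⟩ := MeasurableSet.exists_lt_isCompact
      ((hcont.measurable hE.compl).inter hE) (pos_iff_ne_zero.2 hne)
    -- K ⊆ E, g + K ⊆ Eᶜ
    have ht := tendsto_measure_vadd_sdiff_isCompact_isClosed (μ := lamP r p) hK hK.isClosed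
    have hev : ∀ᶠ h in 𝓝 (0 : QP r p), lamP r p ((h +ᵥ K) \ K) < lamP r p K :=
      ht.eventually (gt_mem_nhds hK0)
    -- choose d near g
    have hmap : Tendsto (fun d : QP r p => g - d) (𝓝 g) (𝓝 0) := by
      have : Continuous (fun d : QP r p => g - d) := by fun_prop
      simpa using this.tendsto g
    have hev2 := hmap.eventually hev
    obtain ⟨d, hdE, hd2⟩ := hd.inter_nhds_nonempty hev2
    have h3 : lamP r p (((g - d) +ᵥ K) \ K) = lamP r p ((g-d) +ᵥ K) := by
      rw [measure_sdiff_null']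
      have hn : lamP r p {y | ¬ (y ∈ (fun x => d + x) ⁻¹' E ↔ y ∈ E)} = 0 := by
        have := ae_iff.1 (eventuallyEq_set.1 hdE)
        exact this
      refine measure_mono_null ?_ hn
      rintro y ⟨hy1, hy2⟩
      obtain ⟨k, hk, rfl⟩ := hy1
      have e1 := (hKs hk).1
      have e2 := (hKs hy2).2
      simp only [mem_preimage, vadd_eq_add] at e1 e2 ⊢
      rw [mem_ofPred_eq]
      have e3 : d + (g - d + k) = g + k := by abel
      rw [e3]
      intro hiff
      exact e1 (hiff.2 e2)
    have hd2 : lamP r p (((g - d) +ᵥ K) \ K) < lamP r p K := hd2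
    rw [h3, measure_vadd] at hd2
    exact lt_irrefl _ hd2
  refine aeconst_of_forall_preimage_vadd_ae_eq (QP r p) hE.nullMeasurableSet ?_
  intro g
  refine (ae_le_set.2 ?_).antisymm (ae_le_set.2 ?_)
  · have h1 := key (-g)
    rw [← measure_preimage_add (lamP r p) g] at h1
    convert h1 using 2
    ext x
    simp only [vadd_eq_add, Set.mem_sdiff, mem_preimage, mem_inter_iff, neg_add_cancel_left, mem_compl_iff]
    tauto
  · convert key g using 2
    ext x
    simp only [vadd_eq_add, Set.mem_sdiff, mem_preimage, mem_inter_iff, mem_compl_iff]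
    tauto

end DSMeasure

section DSDense

open Topology

/-- the product of the primes -/
def dsD {r : ℕ} (p : Fin r → ℕ) : ℕ := ∏ i, p i

variable {r : ℕ} {p : Fin r → ℕ} [hpf : ∀ i, Fact (p i).Prime]

lemma dsD_pos : 0 < dsD p := Finset.prod_pos fun i _ => (hpf i).out.pos

lemma dsD_norm (i : Fin r) : ‖(dsD p : ℚ_[p i])‖ < 1 := by
  have : p i ∣ dsD p := Finset.dvd_prod_of_mem p (Finset.mem_univ i)
  have h := (Padic.norm_intCast_lt_one_iff (p := p i) (k := (dsD p : ℤ))).2 (by exact_mod_cast this)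
  simpa using h

lemma dsD_norm_pos (i : Fin r) : 0 < ‖(dsD p : ℚ_[p i])‖ := by
  rw [norm_pos_iff]
  exact_mod_cast dsD_pos.ne'

lemma ds_crt (hinj : Function.Injective p) (x : (i : Fin r) → ℚ_[p i]) (hx : ∀ i, ‖x i‖ ≤ 1) (M : ℕ) :
    ∃ l : ℕ, ∀ i, ‖x i - (l : ℚ_[p i])‖ ≤ (p i : ℝ) ^ (-(M : ℤ)) := by
  obtain ⟨l, hl⟩ := Nat.chineseRemainderOfFinset
    (fun i => PadicInt.appr (⟨x i, hx i⟩ : ℤ_[p i]) M) (fun i => p i ^ M) Finset.univ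
    (fun i _ => pow_ne_zero _ (hpf i).out.ne_zero)
    (fun i _ j _ hij => Nat.Coprime.pow _ _
      ((Nat.coprime_primes (hpf i).out (hpf j).out).2 fun h => hij (hinj h)))
  refine ⟨l, fun i => ?_⟩
  have h1 := (PadicInt.norm_le_pow_iff_mem_span_pow _ _).2
    (PadicInt.appr_spec M (⟨x i, hx i⟩ : ℤ_[p i]))
  rw [PadicInt.norm_def] at h1
  have h1 : ‖x i - ((PadicInt.appr (⟨x i, hx i⟩ : ℤ_[p i]) M : ℕ) : ℚ_[p i])‖ ≤
    (p i : ℝ) ^ (-(M : ℤ)) := h1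
  have h2 := (Nat.modEq_iff_dvd.1 (hl i (Finset.mem_univ i)))
  have h3 := (Padic.norm_int_le_pow_iff_dvd (p := p i) _ M).2 (by exact_mod_cast h2)
  push_cast at h3
  have := Padic.nonarchimedean (x i - ((PadicInt.appr (⟨x i, hx i⟩ : ℤ_[p i]) M : ℕ) : ℚ_[p i]))
    (((PadicInt.appr (⟨x i, hx i⟩ : ℤ_[p i]) M : ℕ) : ℚ_[p i]) - l)
  rw [sub_add_sub_cancel] at this
  exact this.trans (max_le h1 h3)

lemma ds_approx (hinj : Function.Injective p) (y : (i : Fin r) → ℚ_[p i]) {ε : ℝ} (hε : 0 < ε) :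
    ∃ (l : ℤ) (K : ℕ), ∀ i, ‖y i - (((l : ℚ) / (dsD p : ℚ) ^ K : ℚ) : ℚ_[p i])‖ < ε := by
  have h1 : ∀ᶠ K : ℕ in atTop, ∀ i, ‖(dsD p : ℚ_[p i]) ^ K * y i‖ < 1 := by
    rw [eventually_all]
    intro i
    have : Tendsto (fun K : ℕ => ‖(dsD p : ℚ_[p i]) ^ K * y i‖) atTop (𝓝 0) := by
      simp_rw [norm_mul, norm_pow]
      simpa using (tendsto_pow_atTop_nhds_zero_of_lt_one (norm_nonneg _)
        (dsD_norm i)).mul_const ‖y i‖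
    exact this.eventually (gt_mem_nhds one_pos)
  obtain ⟨K, hK⟩ := h1.exists
  have h2 : ∀ᶠ M : ℕ in atTop, ∀ i, (p i : ℝ) ^ (-(M : ℤ)) < ε * ‖(dsD p : ℚ_[p i]) ^ K‖ := by
    rw [eventually_all]
    intro i
    have hp1 : (1 : ℝ) < p i := by exact_mod_cast (hpf i).out.one_lt
    have : Tendsto (fun M : ℕ => (p i : ℝ) ^ (-(M : ℤ))) atTop (𝓝 0) := by
      simp_rw [zpow_neg, zpow_natCast, ← inv_pow]
      exact tendsto_pow_atTop_nhds_zero_of_lt_one (by positivity) (inv_lt_one_of_one_lt₀ hp1)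
    refine this.eventually (gt_mem_nhds ?_)
    rw [norm_pow]
    have := dsD_norm_pos (p := p) i
    positivity
  obtain ⟨M, hM⟩ := h2.exists
  obtain ⟨l, hl⟩ := ds_crt hinj (fun i => (dsD p : ℚ_[p i]) ^ K * y i) (fun i => (hK i).le) M
  refine ⟨l, K, fun i => ?_⟩
  have h3 := (hl i).trans_lt (hM i)
  have hD : (dsD p : ℚ_[p i]) ^ K ≠ 0 := pow_ne_zero _ (norm_pos_iff.1 (dsD_norm_pos i))
  have h4 : (dsD p : ℚ_[p i]) ^ K * y i - l =
      (y i - (((l : ℤ) : ℚ) / (dsD p : ℚ) ^ K : ℚ)) * (dsD p : ℚ_[p i]) ^ K := by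
    push_cast
    field_simp
  rw [h4, norm_mul] at h3
  exact lt_of_mul_lt_mul_right h3 (norm_nonneg _)

lemma ds_cover (hinj : Function.Injective p) (y : QP r p) :
    ∃ (l : ℤ) (K : ℕ), y + iota r p ((l : ℚ) / (dsD p : ℚ) ^ K) ∈ ZP r p := by
  obtain ⟨l, K, h⟩ := ds_approx hinj y.2 one_pos
  have hD : (dsD p : ℚ) ^ K ≠ 0 := pow_ne_zero _ (by exact_mod_cast dsD_pos.ne')
  set f : ℤ := ⌊y.1 - (((l : ℚ) / (dsD p : ℚ) ^ K : ℚ) : ℝ)⌋ with hf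
  refine ⟨-l - f * (dsD p) ^ K, K, ?_⟩
  have e : (((-l - f * (dsD p) ^ K : ℤ) : ℚ) / (dsD p : ℚ) ^ K) =
      -((l : ℚ) / (dsD p : ℚ) ^ K) - f := by
    push_cast; field_simp
  rw [e]
  constructor
  · simp only [iota, Prod.fst_add, mem_Ico]
    have a1 := Int.floor_le (y.1 - (((l : ℚ) / (dsD p : ℚ) ^ K : ℚ) : ℝ))
    have a2 := Int.lt_floor_add_one (y.1 - (((l : ℚ) / (dsD p : ℚ) ^ K : ℚ) : ℝ))
    rw [← hf] at a1 a2
    push_cast at a1 a2 ⊢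
    constructor <;> linarith
  · intro i
    simp only [iota, Prod.snd_add, Pi.add_apply]
    have a3 : ‖(-(f : ℚ_[p i]))‖ ≤ 1 := by rw [norm_neg]; exact Padic.norm_int_le_one f
    have := Padic.nonarchimedean (y.2 i - (((l : ℚ) / (dsD p : ℚ) ^ K : ℚ) : ℚ_[p i])) (-(f : ℚ_[p i]))
    refine le_trans (le_of_eq ?_) (this.trans (max_le (h i).le a3))
    congr 1
    push_cast
    ring

lemma ds_dense (hinj : Function.Injective p) (q : ℕ) (hq : 1 < q) (hqp : ∀ i, ¬ p i ∣ q) :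
    Dense {g : QP r p | ∃ (l : ℤ) (K k : ℕ),
      g = iota r p ((l : ℚ) / ((dsD p : ℚ) ^ K * (q : ℚ) ^ k))} := by
  rw [Metric.dense_iff]
  intro y ε hε
  obtain ⟨l, K, h⟩ := ds_approx hinj y.2 hε
  have hD0 : (0 : ℝ) < dsD p := by exact_mod_cast dsD_pos
  have hq1 : (1 : ℝ) < q := by exact_mod_cast hq
  have h1 : ∀ᶠ M : ℕ in atTop, ∀ i, ‖(dsD p : ℚ_[p i])‖ ^ M < ε := by
    rw [eventually_all]
    intro i
    exact (tendsto_pow_atTop_nhds_zero_of_lt_one (norm_nonneg _)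
        (dsD_norm i)).eventually (gt_mem_nhds hε)
  obtain ⟨M, hM⟩ := h1.exists
  have h2 : ∀ᶠ k : ℕ in atTop, (dsD p : ℝ) ^ M * (q : ℝ)⁻¹ ^ k < ε := by
    have := (tendsto_pow_atTop_nhds_zero_of_lt_one (r := (q : ℝ)⁻¹) (by positivity)
        (inv_lt_one_of_one_lt₀ hq1)).const_mul ((dsD p : ℝ) ^ M)
    rw [mul_zero] at this
    exact this.eventually (gt_mem_nhds hε)
  obtain ⟨k, hk⟩ := h2.exists
  set s : ℝ := (dsD p : ℝ) ^ M * (q : ℝ)⁻¹ ^ k with hs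
  have hs0 : 0 < s := by positivity
  set j : ℤ := ⌊(y.1 - (((l : ℚ) / (dsD p : ℚ) ^ K : ℚ) : ℝ)) / s⌋ with hj
  refine ⟨iota r p ((l : ℚ) / (dsD p : ℚ) ^ K + j * (dsD p : ℚ) ^ M / (q : ℚ) ^ k), ?_,
    l * q ^ k + j * dsD p ^ M * dsD p ^ K, K, k, ?_⟩
  · rw [Metric.mem_ball, dist_comm, Prod.dist_eq, max_lt_iff]
    constructor
    · rw [Real.dist_eq]
      simp only [iota]
      have a1 := Int.floor_le ((y.1 - (((l : ℚ) / (dsD p : ℚ) ^ K : ℚ) : ℝ)) / s)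
      have a2 := Int.lt_floor_add_one ((y.1 - (((l : ℚ) / (dsD p : ℚ) ^ K : ℚ) : ℝ)) / s)
      rw [← hj] at a1 a2
      rw [le_div_iff₀ hs0] at a1
      rw [div_lt_iff₀ hs0] at a2
      have e : (((l : ℚ) / (dsD p : ℚ) ^ K + j * (dsD p : ℚ) ^ M / (q : ℚ) ^ k : ℚ) : ℝ) =
        (((l : ℚ) / (dsD p : ℚ) ^ K : ℚ) : ℝ) + j * s := by
        rw [hs]; push_cast; rw [inv_pow]; ring
      rw [e, abs_lt]
      constructor <;> linarith
    · rw [dist_pi_lt_iff hε]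
      intro i
      rw [dist_eq_norm]
      simp only [iota]
      have a3 : ‖(-((j : ℚ_[p i]) * (dsD p : ℚ_[p i]) ^ M / (q : ℚ_[p i]) ^ k))‖ < ε := by
        rw [norm_neg, norm_div, norm_mul, norm_pow, norm_pow, padic_norm_natCast_of_not_dvd _ _ (hqp i),
          one_pow, div_one]
        refine lt_of_le_of_lt ?_ (hM i)
        exact mul_le_of_le_one_left (by positivity) (Padic.norm_int_le_one j)
      refine lt_of_le_of_lt (le_of_eq ?_) ((Padic.nonarchimedean _ _).trans_lt (max_lt (h i) a3))
      congr 1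
      push_cast
      ring
  · congr 1
    have hD : (dsD p : ℚ) ≠ 0 := by exact_mod_cast dsD_pos.ne'
    have hq : (q : ℚ) ≠ 0 := by positivity
    push_cast
    field_simp

end DSDense

section DSZeroOne

open Topology

/-- centers with denominator n -/
def dsCent {r : ℕ} (p : Fin r → ℕ) (n : ℕ) : Set ℚ :=
  {b | ∃ (m : ℤ) (K : ℕ), IsCoprime m (n : ℤ) ∧ b = (m : ℚ) / ((n : ℚ) * (dsD p : ℚ) ^ K)}

variable {r : ℕ} {p : Fin r → ℕ} [hpf : ∀ i, Fact (p i).Prime]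

/-- union of boxes around the centers -/
def dsA (p : Fin r → ℕ) [hpf : ∀ i, Fact (p i).Prime] (n : ℕ) (δ : ℝ) (δp : Fin r → ℝ) :
    Set (QP r p) :=
  ⋃ b ∈ dsCent p n, dsBox (b : ℝ) δ (fun i => (b : ℚ_[p i])) δp

/-- limsup set -/
def dsE (p : Fin r → ℕ) [hpf : ∀ i, Fact (p i).Prime] (n : ℕ → ℕ) (δ : ℕ → ℝ)
    (δp : ℕ → Fin r → ℝ) : Set (QP r p) :=
  {x | ∃ᶠ k in atTop, x ∈ dsA p (n k) (δ k) (δp k)}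

lemma mem_dsA (n : ℕ) (δ : ℝ) (δp : Fin r → ℝ) (x : QP r p) :
    x ∈ dsA p n δ δp ↔ ∃ b ∈ dsCent p n, |x.1 - b| < δ ∧ ∀ i, ‖x.2 i - (b : ℚ_[p i])‖ < δp i := by
  simp only [dsA, mem_iUnion, dsBox, mem_ofPred_eq, Metric.mem_ball, dist_eq_norm,
    exists_prop, Real.norm_eq_abs]

lemma dsA_open (n : ℕ) (δ : ℝ) (δp : Fin r → ℝ) : IsOpen (dsA p n δ δp) :=
  isOpen_biUnion fun _ _ => dsBox_open _ _ _ _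

lemma dsE_measurable (n : ℕ → ℕ) (δ : ℕ → ℝ) (δp : ℕ → Fin r → ℝ) :
    MeasurableSet (dsE p n δ δp) := by
  have : dsE p n δ δp = limsup (fun k => dsA p (n k) (δ k) (δp k)) atTop := by
    ext x; rw [mem_limsup_iff_frequently_mem]; rfl
  rw [this]
  exact MeasurableSet.measurableSet_limsup fun k => (dsA_open _ _ _).measurableSet

lemma dsD_coprime {n : ℕ} (hn : ∀ i, ¬ p i ∣ n) : Nat.Coprime (dsD p) n :=
  Nat.Coprime.prod_left fun i _ => ((hpf i).out.coprime_iff_not_dvd).2 (hn i)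

lemma dsCent_add {n : ℕ} (hn : ∀ i, ¬ p i ∣ n) (hn0 : n ≠ 0) {b : ℚ} (hb : b ∈ dsCent p n) (l : ℤ) (K : ℕ) :
    b + (l : ℚ) / (dsD p : ℚ) ^ K ∈ dsCent p n := by
  obtain ⟨m, K1, hm, rfl⟩ := hb
  refine ⟨m * dsD p ^ K + n * (l * dsD p ^ K1), K1 + K, ?_, ?_⟩
  · rw [IsCoprime.add_mul_left_left_iff]
    refine IsCoprime.mul_left hm (IsCoprime.pow_left ?_)
    exact Nat.isCoprime_iff_coprime.2 (dsD_coprime hn)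
  · have hD : (dsD p : ℚ) ≠ 0 := by exact_mod_cast dsD_pos.ne'
    have hq : (n : ℚ) ≠ 0 := by positivity
    push_cast
    field_simp
    ring

lemma dsA_add {n : ℕ} (hn : ∀ i, ¬ p i ∣ n) (hn0 : n ≠ 0) {δ : ℝ} {δp : Fin r → ℝ} (l : ℤ) (K : ℕ) {x : QP r p}
    (hx : x ∈ dsA p n δ δp) : x + iota r p ((l : ℚ) / (dsD p : ℚ) ^ K) ∈ dsA p n δ δp := by
  rw [mem_dsA] at hx ⊢
  obtain ⟨b, hb, h1, h2⟩ := hx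
  refine ⟨_, dsCent_add hn hn0 hb l K, ?_, fun i => ?_⟩
  · simp only [iota, Prod.fst_add]
    convert h1 using 2
    push_cast; ring
  · simp only [iota, Prod.snd_add, Pi.add_apply]
    convert h2 i using 2
    push_cast; ring

lemma dsE_add {n : ℕ → ℕ} (hn : ∀ k i, ¬ p i ∣ n k) (hn0 : ∀ k, n k ≠ 0) {δ : ℕ → ℝ} {δp : ℕ → Fin r → ℝ}
    (l : ℤ) (K : ℕ) (x : QP r p) :
    x + iota r p ((l : ℚ) / (dsD p : ℚ) ^ K) ∈ dsE p n δ δp ↔ x ∈ dsE p n δ δp := by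
  constructor
  · intro h
    refine Frequently.mono h fun k hk => ?_
    have := dsA_add (hn k) (hn0 k) (-l) K hk
    rwa [add_assoc, ← iota_add, Int.cast_neg, neg_div, add_neg_cancel,
      show iota r p 0 = 0 by ext <;> simp [iota], add_zero] at this
  · intro h
    exact Frequently.mono h fun k hk => dsA_add (hn k) (hn0 k) l K hk

lemma dsA_mul {n : ℕ} {δ : ℝ} {δp : Fin r → ℝ} {Q : ℕ} (hQ0 : Q ≠ 0) (hQ : ∀ i, ¬ p i ∣ Q)
    (hQn : Nat.Coprime Q n) {x : QP r p}
    (hx : x ∈ dsA p n δ δp) : smulQ r p Q x ∈ dsA p n (Q * δ) δp := by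
  rw [mem_dsA] at hx ⊢
  obtain ⟨b, ⟨m, K, hm, rfl⟩, h1, h2⟩ := hx
  refine ⟨(Q : ℚ) * ((m : ℚ) / ((n : ℚ) * (dsD p : ℚ) ^ K)), ⟨Q * m, K,
    IsCoprime.mul_left (Nat.isCoprime_iff_coprime.2 hQn) hm, by push_cast; ring⟩, ?_, fun i => ?_⟩
  · have hQ1 : (0 : ℝ) < Q := by positivity
    simp only [smulQ]
    rw [Rat.cast_mul, Rat.cast_natCast, ← mul_sub, abs_mul, abs_of_pos hQ1]
    exact mul_lt_mul_of_pos_left h1 hQ1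
  · simp only [smulQ]
    rw [Rat.cast_mul, Rat.cast_natCast, ← mul_sub, norm_mul, padic_norm_natCast_of_not_dvd _ _ (hQ i),
      one_mul]
    exact h2 i

lemma dsE_scale {n : ℕ → ℕ} {δ : ℕ → ℝ} {δp : ℕ → Fin r → ℝ} (hδ : Tendsto δ atTop (𝓝 0))
    {C : ℝ} (hC : 0 < C) :
    lamP r p (dsE p n (fun k => C * δ k) δp \ dsE p n δ δp) = 0 := by
  rw [lamP, Measure.prod_apply_symm ((dsE_measurable _ _ _).diff (dsE_measurable _ _ _))]
  rw [lintegral_eq_zero_iff' ?_]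
  swap
  · exact (measurable_measure_prodMk_right
      ((dsE_measurable _ _ _).diff (dsE_measurable _ _ _))).aemeasurable
  refine ae_of_all _ fun z => ?_
  let s : ℕ → Set ℝ := fun k => {t | ∃ b ∈ dsCent p (n k), t = b ∧ ∀ i, ‖z i - (b : ℚ_[p i])‖ < δp k i}
  have key := blimsup_thickening_mul_ae_eq (volume : Measure ℝ) (fun _ => True) s hC δ hδ
  simp only [blimsup_true] at key
  have e : ∀ (δ' : ℕ → ℝ), (fun x : ℝ => (x, z)) ⁻¹' dsE p n δ' δp =
      limsup (fun i => Metric.thickening (δ' i) (s i)) atTop := by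
    intro δ'
    ext t
    rw [mem_limsup_iff_frequently_mem]
    simp only [dsE, mem_preimage, mem_ofPred_eq, mem_dsA, Metric.mem_thickening_iff, s, Real.dist_eq]
    refine frequently_congr (Eventually.of_forall fun k => ?_)
    constructor
    · rintro ⟨b, hb, h1, h2⟩
      exact ⟨b, ⟨b, hb, rfl, h2⟩, h1⟩
    · rintro ⟨_, ⟨b, hb, rfl, h2⟩, h1⟩
      exact ⟨b, hb, h1, h2⟩
  show volume ((fun x : ℝ => (x, z)) ⁻¹' (dsE p n (fun k => C * δ k) δp \ dsE p n δ δp)) = 0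
  rw [Set.preimage_sdiff, e, e]
  exact ae_le_set.1 key.le

lemma ds_zeroone (hinj : Function.Injective p) {n : ℕ → ℕ} (hn : ∀ k i, ¬ p i ∣ n k)
    (hn0 : ∀ k, n k ≠ 0) {δ : ℕ → ℝ} {δp : ℕ → Fin r → ℝ} (hδ : Tendsto δ atTop (𝓝 0))
    {q : ℕ} (hq : q.Prime) (hqp : ∀ i, ¬ p i ∣ q) (hqn : ∀ k, ¬ q ∣ n k)
    (hpos : lamP r p (ZP r p ∩ dsE p n δ δp) ≠ 0) :
    lamP r p (ZP r p ∩ dsE p n δ δp) = 1 := by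
  set E := dsE p n δ δp with hE
  have hEm : MeasurableSet E := dsE_measurable _ _ _
  have hint : ∀ j : ℤ, ∀ x, x + iota r p j ∈ E ↔ x ∈ E := fun j x => by
    simpa using dsE_add (δ := δ) (δp := δp) hn hn0 j 0 x
  -- translation helper
  have hnull : ∀ N : Set (QP r p), lamP r p (ZP r p ∩ N) = 0 →
      (∀ (l : ℤ) (K : ℕ) (x : QP r p), x + iota r p ((l : ℚ) / (dsD p : ℚ) ^ K) ∈ N ↔ x ∈ N) →
      lamP r p N = 0 := by
    intro N h0 hN
    have : N ⊆ ⋃ (a : ℤ × ℕ), (fun x => x + iota r p ((a.1 : ℚ) / (dsD p : ℚ) ^ a.2)) ⁻¹' (ZP r p ∩ N) := by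
      intro y hy
      obtain ⟨l, K, h⟩ := ds_cover hinj y
      exact mem_iUnion.2 ⟨(l, K), h, (hN l K y).2 hy⟩
    refine measure_mono_null this (measure_iUnion_null fun a => ?_)
    rw [measure_preimage_add_right, h0]
  have hQ : ∀ k : ℕ, smulQ r p ((q ^ k : ℕ) : ℚ) ⁻¹' E =ᵐ[lamP r p] E := by
    intro k
    have hQ0 : q ^ k ≠ 0 := pow_ne_zero _ hq.ne_zero
    have hQp : ∀ i, ¬ p i ∣ q ^ k := fun i h => hqp i ((hpf i).out.dvd_of_dvd_pow h)
    have hQn : ∀ j, Nat.Coprime (q ^ k) (n j) := fun j =>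
      Nat.Coprime.pow_left _ ((hq.coprime_iff_not_dvd).2 (hqn j))
    have hcont : Continuous (smulQ r p ((q ^ k : ℕ) : ℚ)) := by unfold smulQ; fun_prop
    have hTm : MeasurableSet (smulQ r p ((q ^ k : ℕ) : ℚ) ⁻¹' E) := hcont.measurable hEm
    have hpm := dsMul_preserve (q ^ k) hQ0 hQp E hint hEm
    -- E ⊆ T⁻¹ E_Q
    have hsub : E ⊆ smulQ r p ((q ^ k : ℕ) : ℚ) ⁻¹' (dsE p n (fun j => (q ^ k : ℕ) * δ j) δp) := by
      intro x hx
      exact Frequently.mono hx fun j hj => dsA_mul hQ0 hQp (hQn j) hj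
    have hEQ := dsE_scale (p := p) (n := n) (δp := δp) hδ (C := ((q ^ k : ℕ) : ℝ)) (by positivity)
    have h1 : lamP r p (E \ smulQ r p ((q ^ k : ℕ) : ℚ) ⁻¹' E) = 0 := by
      refine measure_mono_null (t := smulQ r p ((q ^ k : ℕ) : ℚ) ⁻¹'
        (dsE p n (fun j => (q ^ k : ℕ) * δ j) δp \ E)) ?_ ?_
      · intro x hx
        exact ⟨hsub hx.1, hx.2⟩
      · rw [dsMul_meas (q ^ k) hQ0 hQp _ ((dsE_measurable _ _ _).diff hEm), hEQ, mul_zero]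
    have h2 : lamP r p (ZP r p ∩ (smulQ r p ((q ^ k : ℕ) : ℚ) ⁻¹' E \ E)) = 0 := by
      have hle : (ZP r p ∩ E : Set (QP r p)) ≤ᵐ[lamP r p] (ZP r p ∩ smulQ r p ((q ^ k : ℕ) : ℚ) ⁻¹' E : Set (QP r p)) := by
        rw [ae_le_set]
        refine measure_mono_null ?_ h1
        rintro x ⟨⟨hx1, hx2⟩, hx3⟩
        exact ⟨hx2, fun h => hx3 ⟨hx1, h⟩⟩
      have hZm : MeasurableSet (ZP r p) := by rw [ZP_eq]; exact dsSlab_measurable _ _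
      have := ae_eq_of_ae_subset_of_measure_ge hle hpm.le (hZm.inter hEm).nullMeasurableSet
        (ne_top_of_le_ne_top (by rw [ZP_meas]; simp) (measure_mono inter_subset_left))
      refine measure_mono_null ?_ (ae_le_set.1 this.symm.le)
      rintro x ⟨hx1, hx2, hx3⟩
      exact ⟨⟨hx1, hx2⟩, fun h => hx3 h.2⟩
    have h3 : lamP r p (smulQ r p ((q ^ k : ℕ) : ℚ) ⁻¹' E \ E) = 0 := by
      refine hnull _ h2 fun l K x => ?_
      have a1 := dsE_add (δ := δ) (δp := δp) hn hn0 l K x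
      have a2 := dsE_add (δ := δ) (δp := δp) hn hn0 ((q ^ k : ℕ) * l) K (smulQ r p ((q ^ k : ℕ) : ℚ) x)
      have e : smulQ r p ((q ^ k : ℕ) : ℚ) (x + iota r p ((l : ℚ) / (dsD p : ℚ) ^ K)) =
          smulQ r p ((q ^ k : ℕ) : ℚ) x + iota r p ((((q ^ k : ℕ) * l : ℤ) : ℚ) / (dsD p : ℚ) ^ K) := by
        ext <;> simp [smulQ, iota] <;> ring
      rw [Set.mem_sdiff, Set.mem_sdiff, mem_preimage, mem_preimage, e, a1, a2]
    exact (ae_le_set.2 h3).antisymm (ae_le_set.2 h1)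
  have herg := dsErg E hEm (by
    refine (ds_dense hinj q hq.one_lt hqp).mono ?_
    rintro g ⟨l, K, k, rfl⟩
    have hinv : (fun x => iota r p ((l : ℚ) / ((dsD p : ℚ) ^ K * (q : ℚ) ^ k)) + x) ⁻¹'
        (smulQ r p ((q ^ k : ℕ) : ℚ) ⁻¹' E) = smulQ r p ((q ^ k : ℕ) : ℚ) ⁻¹' E := by
      ext x
      have a2 := dsE_add (δ := δ) (δp := δp) hn hn0 l K (smulQ r p ((q ^ k : ℕ) : ℚ) x)
      have hq0 : (q : ℚ) ≠ 0 := by exact_mod_cast hq.ne_zero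
      have e0 : (l : ℚ) / (dsD p : ℚ) ^ K = ((q ^ k : ℕ) : ℚ) * ((l : ℚ) / ((dsD p : ℚ) ^ K * (q : ℚ) ^ k)) := by
        have hD : (dsD p : ℚ) ≠ 0 := by exact_mod_cast dsD_pos.ne'
        push_cast
        field_simp
      have e : smulQ r p ((q ^ k : ℕ) : ℚ) (iota r p ((l : ℚ) / ((dsD p : ℚ) ^ K * (q : ℚ) ^ k)) + x) =
          smulQ r p ((q ^ k : ℕ) : ℚ) x + iota r p ((l : ℚ) / (dsD p : ℚ) ^ K) := by
        rw [e0]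
        ext <;> simp only [smulQ, iota, Prod.fst_add, Prod.snd_add, Pi.add_apply, Rat.cast_mul] <;> ring
      rw [mem_preimage, mem_preimage, e, a2, mem_preimage]
    have t := (quasiMeasurePreserving_add_left (lamP r p)
      (iota r p ((l : ℚ) / ((dsD p : ℚ) ^ K * (q : ℚ) ^ k)))).preimage_ae_eq (hQ k)
    rw [hinv] at t
    exact t.symm.trans (hQ k))
  rw [eventuallyConst_set'] at herg
  rcases herg with h | h
  · exfalso
    apply hpos
    exact measure_mono_null inter_subset_right (ae_eq_empty.1 h)
  · have : (ZP r p ∩ E : Set (QP r p)) =ᵐ[lamP r p] (ZP r p : Set (QP r p)) := by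
      have := (ae_eq_refl (ZP r p : Set (QP r p))).inter h
      simpa using this
    rw [measure_congr this, ZP_meas]

end DSZeroOne

section DSLocal

open Topology

variable {r : ℕ} {p : Fin r → ℕ} [hpf : ∀ i, Fact (p i).Prime]

/-- box around `a/n` -/
def dsBx (p : Fin r → ℕ) [hpf : ∀ i, Fact (p i).Prime] (n : ℕ) (δ : ℝ) (δp : Fin r → ℝ) (a : ℕ) :
    Set (QP r p) :=
  dsBox (((a : ℚ) / (n : ℚ) : ℚ) : ℝ) δ (fun i => (((a : ℚ) / (n : ℚ) : ℚ) : ℚ_[p i])) δp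

/-- reduced residues -/
def dsS (n : ℕ) : Finset ℕ := (Finset.range n).filter (n.Coprime)

lemma dsS_card (n : ℕ) : (dsS n).card = Nat.totient n := rfl

lemma mem_dsS {n a : ℕ} : a ∈ dsS n ↔ a < n ∧ n.Coprime a := by simp [dsS]

lemma mem_dsBx (n : ℕ) (δ : ℝ) (δp : Fin r → ℝ) (a : ℕ) (x : QP r p) :
    x ∈ dsBx p n δ δp a ↔ |x.1 - (a : ℝ) / n| < δ ∧ ∀ i, ‖x.2 i - (a : ℚ_[p i]) / n‖ < δp i := by
  simp only [dsBx, dsBox, mem_ofPred_eq, Metric.mem_ball, dist_eq_norm, Real.norm_eq_abs]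
  push_cast
  rfl

lemma dsBx_measurable (n : ℕ) (δ : ℝ) (δp : Fin r → ℝ) (a : ℕ) :
    MeasurableSet (dsBx p n δ δp a) := (dsBox_open _ _ _ _).measurableSet

lemma ds_integral (hinj : Function.Injective p) {n : ℕ} (hn : ∀ i, ¬ p i ∣ n) (hn0 : n ≠ 0) {b : ℚ}
    (hb : b ∈ dsCent p n) (hb1 : ∀ i, ‖(b : ℚ_[p i])‖ ≤ 1) :
    ∃ a : ℤ, IsCoprime a (n : ℤ) ∧ b = (a : ℚ) / n := by
  obtain ⟨m, K, hm, rfl⟩ := hb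
  have hD : (dsD p : ℚ) ≠ 0 := by exact_mod_cast dsD_pos.ne'
  have h1 : ∀ i, ((p i : ℤ) ^ K) ∣ m := by
    intro i
    rw [← Int.natCast_pow, Int.natCast_pow, ← Padic.norm_int_le_pow_iff_dvd (p := p i)]
    have h2 := hb1 i
    push_cast at h2
    rw [norm_div, norm_mul, padic_norm_natCast_of_not_dvd _ _ (hn i), one_mul, norm_pow,
      div_le_one (pow_pos (dsD_norm_pos i) _)] at h2
    refine h2.trans ?_
    rw [zpow_neg, zpow_natCast, ← inv_pow]
    refine pow_le_pow_left₀ (norm_nonneg _) ?_ _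
    have h3 : p i ^ 1 ∣ dsD p := by
      rw [pow_one]; exact Finset.dvd_prod_of_mem p (Finset.mem_univ i)
    have := (Padic.norm_int_le_pow_iff_dvd (p := p i) (dsD p : ℤ) 1).2 (by exact_mod_cast h3)
    simpa using this
  have h2 : ((dsD p : ℤ) ^ K) ∣ m := by
    rw [dsD, Nat.cast_prod, ← Finset.prod_pow]
    refine Finset.prod_dvd_of_coprime ?_ fun i _ => h1 i
    intro i _ j _ hij
    refine IsCoprime.pow ?_
    exact Nat.isCoprime_iff_coprime.2
      ((Nat.coprime_primes (hpf i).out (hpf j).out).2 fun h => hij (hinj h))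
  obtain ⟨a, rfl⟩ := h2
  refine ⟨a, hm.of_mul_left_right, ?_⟩
  have hq : (n : ℚ) ≠ 0 := by positivity
  push_cast
  field_simp

lemma ds_loc (hinj : Function.Injective p) {n : ℕ} (hn : ∀ i, ¬ p i ∣ n) (hn2 : 2 ≤ n)
    {δ : ℝ} {δp : Fin r → ℝ} (hδ : δ ≤ 1 / (2 * n)) (hδp : ∀ i, δp i ≤ 1) :
    ZP r p ∩ dsA p n δ δp = ⋃ a ∈ dsS n, dsBx p n δ δp a := by
  have hn0 : (0 : ℝ) < n := by positivity
  have hnn : (n : ℝ) * (1 / (2 * n)) = 1 / 2 := by field_simp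
  ext x
  simp only [mem_inter_iff, mem_iUnion, exists_prop, mem_dsA, mem_dsBx]
  constructor
  · rintro ⟨⟨hx1, hx2⟩, b, hb, h1, h2⟩
    obtain ⟨a, ha, rfl⟩ := ds_integral hinj hn (by omega) hb (fun i => by
      have := Padic.nonarchimedean (x.2 i) (-(x.2 i - (b : ℚ_[p i])))
      rw [norm_neg, show x.2 i + -(x.2 i - (b : ℚ_[p i])) = b by ring] at this
      exact this.trans (max_le (hx2 i) ((h2 i).le.trans (hδp i))))
    push_cast at h1 h2
    have h3 := abs_lt.1 (h1.trans_le hδ)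
    have e : (n : ℝ) * ((a : ℝ) / n) = a := by field_simp
    have h5 : -(1 / 2 : ℝ) < a := by nlinarith [hx1.1]
    have h6 : (a : ℝ) < n + 1 / 2 := by nlinarith [hx1.2]
    have a0 : 0 ≤ a := by
      by_contra h
      have : (a : ℝ) ≤ -1 := by exact_mod_cast (by omega : a ≤ -1)
      linarith
    have a1 : a ≤ n := by
      by_contra h
      have : (n : ℝ) + 1 ≤ a := by exact_mod_cast (by omega : (n : ℤ) + 1 ≤ a)
      linarith
    have a2 : a ≠ n := by
      rintro rfl
      rw [isCoprime_self, Int.isUnit_iff] at ha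
      omega
    lift a to ℕ using a0
    refine ⟨a, mem_dsS.2 ⟨by omega, (Nat.isCoprime_iff_coprime.1 ha).symm⟩, ?_, ?_⟩
    · simpa using h1
    · intro i; simpa using h2 i
  · rintro ⟨a, ha, h1, h2⟩
    rw [mem_dsS] at ha
    have a0 : 1 ≤ a := by
      rcases Nat.eq_zero_or_pos a with rfl | h
      · have := ha.2
        rw [Nat.coprime_zero_right] at this; omega
      · exact h
    have h3 := abs_lt.1 (h1.trans_le hδ)
    have e : (n : ℝ) * ((a : ℝ) / n) = a := by field_simp
    have b0 : (1 : ℝ) ≤ a := by exact_mod_cast a0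
    have b1 : (a : ℝ) + 1 ≤ n := by exact_mod_cast ha.1
    refine ⟨⟨⟨?_, ?_⟩, fun i => ?_⟩, (a : ℚ) / n, ⟨a, 0, Nat.isCoprime_iff_coprime.2 ha.2.symm, by simp⟩, ?_, ?_⟩
    · by_contra h; push Not at h; nlinarith
    · by_contra h; push Not at h; nlinarith
    · have := Padic.nonarchimedean (x.2 i - (a : ℚ_[p i]) / (n : ℚ_[p i])) ((a : ℚ_[p i]) / (n : ℚ_[p i]))
      rw [sub_add_cancel] at this
      refine this.trans (max_le ((h2 i).le.trans (hδp i)) ?_)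
      rw [norm_div, padic_norm_natCast_of_not_dvd _ _ (hn i), div_one]
      exact_mod_cast Padic.norm_int_le_one (a : ℤ)
    · push_cast; exact h1
    · intro i; push_cast; exact h2 i

lemma ds_lower (hinj : Function.Injective p) {n : ℕ} (hn : ∀ i, ¬ p i ∣ n) (hn2 : 2 ≤ n)
    {δ : ℝ} {δp : Fin r → ℝ} (hδ0 : 0 < δ) (hδp0 : ∀ i, 0 < δp i)
    (hδ : δ ≤ 1 / (2 * n)) (hδp : ∀ i, δp i ≤ 1) :
    ENNReal.ofReal (Nat.totient n * ((2 * δ * ∏ i, δp i) / ∏ i, (p i : ℝ))) ≤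
      lamP r p (ZP r p ∩ dsA p n δ δp) := by
  rw [ds_loc hinj hn hn2 hδ hδp, measure_biUnion_finset]
  · rw [ENNReal.ofReal_mul (by positivity), ENNReal.ofReal_natCast, ← dsS_card, ← nsmul_eq_mul]
    exact Finset.card_nsmul_le_sum _ _ _ fun a _ => (dsBox_meas _ _ _ _ hδ0 hδp0 hδp).1
  · intro a _ b _ hab
    rw [Function.onFun, Set.disjoint_left]
    intro x h1 h2
    rw [mem_dsBx] at h1 h2
    have h3 := abs_lt.1 (h1.1.trans_le hδ)
    have h4 := abs_lt.1 (h2.1.trans_le hδ)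
    have hn0 : (0 : ℝ) < n := by positivity
    have hnn : (n : ℝ) * (1 / (2 * n)) = 1 / 2 := by field_simp
    have e : (n : ℝ) * ((a : ℝ) / n) = a := by field_simp
    have e' : (n : ℝ) * ((b : ℝ) / n) = b := by field_simp
    have l1 : (a : ℝ) < b + 1 := by nlinarith
    have l2 : (b : ℝ) < a + 1 := by nlinarith
    have l1' : a < b + 1 := by exact_mod_cast l1
    have l2' : b < a + 1 := by exact_mod_cast l2
    omega
  · intro a _; exact dsBx_measurable _ _ _ _

lemma dsBx_inter_meas (n n' a a' : ℕ) {δ δ' : ℝ} {δp δp' : Fin r → ℝ} (hδ0 : 0 < δ) (hδp0 : ∀ i, 0 < δp i)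
    (hδ0' : 0 < δ') (hδp0' : ∀ i, 0 < δp' i) (hδp : ∀ i, δp i ≤ 1) :
    lamP r p (dsBx p n δ δp a ∩ dsBx p n' δ' δp' a') ≤
      ENNReal.ofReal (2 * min δ δ' * ∏ i, min (δp i) (δp' i)) := by
  refine le_trans (measure_mono ?_) (dsBox_meas (if δ ≤ δ' then (((a : ℚ) / (n : ℚ) : ℚ) : ℝ) else (((a' : ℚ) / (n' : ℚ) : ℚ) : ℝ))
    (min δ δ') (fun i => if δp i ≤ δp' i then (((a : ℚ) / (n : ℚ) : ℚ) : ℚ_[p i]) else (((a' : ℚ) / (n' : ℚ) : ℚ) : ℚ_[p i]))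
    (fun i => min (δp i) (δp' i)) (lt_min hδ0 hδ0') (fun i => lt_min (hδp0 i) (hδp0' i))
    (fun i => (min_le_left _ _).trans (hδp i))).2
  rintro x ⟨⟨h1, h2⟩, ⟨h3, h4⟩⟩
  refine ⟨?_, fun i => ?_⟩
  · split_ifs with h
    · rwa [min_eq_left h]
    · rwa [min_eq_right (not_le.1 h).le]
  · have := h2 i
    have := h4 i
    dsimp only at *
    split_ifs with h
    · rwa [min_eq_left h]
    · rwa [min_eq_right (not_le.1 h).le]

end DSLocal

section DSOverlap

open Topology

lemma ds_count {n n' Q0 : ℕ} (hn : 0 < n) (hn' : 0 < n') (hQ0 : 0 < Q0) (hQn : Nat.Coprime Q0 n) {R : ℝ}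
    (hR : 0 ≤ R) (T : Finset (ℕ × ℕ))
    (hT : ∀ ab ∈ T, ab.1 < n ∧ ((ab.1 : ℤ) * n' - ab.2 * n) ≠ 0 ∧
      |(((ab.1 : ℤ) * n' - ab.2 * n : ℤ) : ℝ)| < R ∧ (Q0 : ℤ) ∣ ((ab.1 : ℤ) * n' - ab.2 * n)) :
    (T.card : ℝ) ≤ 2 * R / Q0 := by
  obtain ⟨g, hg⟩ : ∃ g, g = Nat.gcd n n' := ⟨_, rfl⟩
  have hg0 : 0 < g := hg ▸ Nat.gcd_pos_of_pos_left _ hn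
  obtain ⟨u, hu⟩ : g ∣ n := hg ▸ Nat.gcd_dvd_left _ _
  obtain ⟨u', hu'⟩ : g ∣ n' := hg ▸ Nat.gcd_dvd_right _ _
  have huu : Nat.Coprime u u' := by
    have := Nat.coprime_div_gcd_div_gcd (m := n) (n := n') (hg ▸ hg0)
    rw [← hg] at this
    rwa [hu, hu', Nat.mul_div_cancel_left _ hg0, Nat.mul_div_cancel_left _ hg0] at this
  have hu0 : 0 < u := Nat.pos_of_ne_zero (by rintro rfl; simp at hu; omega)
  have hu0' : 0 < u' := Nat.pos_of_ne_zero (by rintro rfl; simp at hu'; omega)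
  have hdv : ∀ ab ∈ T, ((g * Q0 : ℕ) : ℤ) ∣ ((ab.1 : ℤ) * n' - ab.2 * n) := by
    intro ab hab
    have h1 := (hT ab hab).2.2.2
    have h2 : (g : ℤ) ∣ ((ab.1 : ℤ) * n' - ab.2 * n) := by
      rw [hu, hu']; push_cast
      exact ⟨ab.1 * u' - ab.2 * u, by ring⟩
    push_cast
    refine IsCoprime.mul_dvd ?_ h2 h1
    refine Nat.isCoprime_iff_coprime.2 (Nat.Coprime.symm ?_)
    exact Nat.Coprime.coprime_dvd_right ⟨u, hu⟩ hQn
  set M : ℕ := ⌊R / ((g * Q0 : ℕ) : ℝ)⌋₊ with hM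
  have hG : (0 : ℝ) < ((g * Q0 : ℕ) : ℝ) := by positivity
  have hGz : ((g * Q0 : ℕ) : ℤ) ≠ 0 := by positivity
  let f : ℕ × ℕ → ℤ × ℕ := fun ab => (((ab.1 : ℤ) * n' - ab.2 * n) / ((g * Q0 : ℕ) : ℤ), ab.1 / u)
  have hcard : T.card ≤ (((Finset.Icc (-(M : ℤ)) M).erase 0) ×ˢ Finset.range g).card := by
    refine Finset.card_le_card_of_injOn f ?_ ?_
    · intro ab hab
      obtain ⟨h1, h2, h3, h4⟩ := hT ab hab
      obtain ⟨j, hj⟩ := hdv ab hab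
      have hj0 : j ≠ 0 := by rintro rfl; exact h2 (by rw [hj, mul_zero])
      have e : (f ab).1 = j := by
        show ((ab.1 : ℤ) * n' - ab.2 * n) / ((g * Q0 : ℕ) : ℤ) = j
        rw [hj, Int.mul_ediv_cancel_left _ hGz]
      rw [Finset.mem_coe, Finset.mem_product, e, Finset.mem_erase, Finset.mem_Icc, Finset.mem_range]
      refine ⟨⟨hj0, ?_⟩, ?_⟩
      · rw [hj] at h3
        push_cast at h3
        rw [abs_mul, ← Nat.cast_mul, abs_of_pos hG] at h3
        have h5 : |(j : ℝ)| ≤ R / ((g * Q0 : ℕ) : ℝ) := by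
          rw [le_div_iff₀ hG]; linarith
        have h6 : j.natAbs ≤ M := by
          apply Nat.le_floor
          rw [Nat.cast_natAbs]
          exact_mod_cast h5
        omega
      · show ab.1 / u < g
        rw [Nat.div_lt_iff_lt_mul hu0]
        rw [hu] at h1; exact h1
    · intro ab hab cd hcd h
      obtain ⟨j, hj⟩ := hdv ab hab
      obtain ⟨j', hj'⟩ := hdv cd hcd
      have h1 : ((ab.1 : ℤ) * n' - ab.2 * n) / ((g * Q0 : ℕ) : ℤ) =
        ((cd.1 : ℤ) * n' - cd.2 * n) / ((g * Q0 : ℕ) : ℤ) := congrArg Prod.fst h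
      have h2 : ab.1 / u = cd.1 / u := congrArg Prod.snd h
      rw [hj, hj', Int.mul_ediv_cancel_left _ hGz, Int.mul_ediv_cancel_left _ hGz] at h1
      rw [h1, ← hj'] at hj
      have hgz : (g : ℤ) ≠ 0 := by positivity
      have h3 : ((ab.1 : ℤ) - cd.1) * u' = ((ab.2 : ℤ) - cd.2) * u := by
        apply mul_left_cancel₀ hgz
        rw [hu, hu'] at hj
        push_cast at hj
        linarith
      have h4 : (u : ℤ) ∣ (ab.1 : ℤ) - cd.1 := by
        have : (u : ℤ) ∣ ((ab.1 : ℤ) - cd.1) * u' := ⟨_, h3.trans (mul_comm _ _)⟩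
        exact (Nat.isCoprime_iff_coprime.2 huu).dvd_of_dvd_mul_right this
      have h5 : ab.1 = cd.1 := by
        have m1 : cd.1 ≡ ab.1 [MOD u] := Nat.modEq_iff_dvd.2 h4
        rw [← Nat.div_add_mod ab.1 u, ← Nat.div_add_mod cd.1 u, h2, m1.symm]
      have h6 : ab.2 = cd.2 := by
        rw [h5, sub_self, zero_mul] at h3
        have := (mul_eq_zero.1 h3.symm).resolve_right (by positivity)
        omega
      exact Prod.ext h5 h6
  rw [Finset.card_product, Finset.card_range, Finset.card_erase_of_mem (by simp), Int.card_Icc] at hcard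
  have h7 : T.card ≤ 2 * M * g := by
    refine hcard.trans (Nat.mul_le_mul_right _ ?_)
    omega
  have h8 : (M : ℝ) ≤ R / ((g * Q0 : ℕ) : ℝ) := Nat.floor_le (by positivity)
  calc (T.card : ℝ) ≤ 2 * M * g := by exact_mod_cast h7
    _ ≤ 2 * (R / ((g * Q0 : ℕ) : ℝ)) * g := by gcongr
    _ = 2 * R / Q0 := by push_cast; field_simp

lemma ds_exp (q : ℕ) [hq : Fact q.Prime] {Δ : ℝ} (hΔ : 0 < Δ) :
    ∃ e : ℕ, 1 / Δ ≤ (q : ℝ) ^ e ∧ ∀ d : ℤ, ‖(d : ℚ_[q])‖ < Δ → ((q ^ e : ℕ) : ℤ) ∣ d := by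
  classical
  have hq1 : (1 : ℝ) < q := by exact_mod_cast hq.out.one_lt
  have hex : ∃ e : ℕ, 1 / Δ < (q : ℝ) ^ e := pow_unbounded_of_one_lt _ hq1
  refine ⟨Nat.find hex, (Nat.find_spec hex).le, fun d hd => ?_⟩
  rcases h : Nat.find hex with _ | e
  · simp
  · have h1 := Nat.find_min hex (m := e) (by omega)
    push Not at h1
    have h2 : ‖(d : ℚ_[q])‖ < (q : ℝ) ^ (-(e : ℤ)) := by
      refine hd.trans_le ?_
      rw [zpow_neg, zpow_natCast]
      rw [le_inv_comm₀ hΔ (by positivity)]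
      simpa using h1
    rw [Nat.cast_pow, ← Padic.norm_int_le_pow_iff_dvd, Padic.norm_le_pow_iff_norm_lt_pow_add_one]
    convert h2 using 2
    push_cast; ring

variable {r : ℕ} {p : Fin r → ℕ} [hpf : ∀ i, Fact (p i).Prime]

lemma ds_overlap (hinj : Function.Injective p) {n n' : ℕ} (hn : ∀ i, ¬ p i ∣ n) (hn2 : 2 ≤ n)
    (hn' : ∀ i, ¬ p i ∣ n') (hn2' : 2 ≤ n')
    {δ δ' : ℝ} {δp δp' : Fin r → ℝ} (hδ0 : 0 < δ) (hδp0 : ∀ i, 0 < δp i)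
    (hδ0' : 0 < δ') (hδp0' : ∀ i, 0 < δp' i)
    (hδ : δ ≤ 1 / (2 * n)) (hδp : ∀ i, δp i ≤ 1) (hδ' : δ' ≤ 1 / (2 * n')) (hδp' : ∀ i, δp' i ≤ 1) :
    lamP r p ((ZP r p ∩ dsA p n δ δp) ∩ (ZP r p ∩ dsA p n' δ' δp')) ≤
      ENNReal.ofReal (8 * ((n * (δ * ∏ i, δp i)) * (n' * (δ' * ∏ i, δp' i))) +
        if n = n' then 2 * (n * (min δ δ' * ∏ i, min (δp i) (δp' i))) else 0) := by
  classical
  have hn0 : (0 : ℝ) < n := by positivity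
  have hn0' : (0 : ℝ) < n' := by positivity
  choose e he1 he2 using fun i => ds_exp (p i) (Δ := max (δp i) (δp' i)) (lt_max_of_lt_left (hδp0 i))
  set Q0 : ℕ := ∏ i, p i ^ e i with hQ0
  have hQpos : 0 < Q0 := Finset.prod_pos fun i _ => pow_pos (hpf i).out.pos _
  have hQn : Nat.Coprime Q0 n := Nat.Coprime.prod_left fun i _ =>
    Nat.Coprime.pow_left _ (((hpf i).out.coprime_iff_not_dvd).2 (hn i))
  have hmaxp : 0 < ∏ i, max (δp i) (δp' i) := Finset.prod_pos fun i _ => lt_max_of_lt_left (hδp0 i)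
  have hQ1 : 1 / ∏ i, max (δp i) (δp' i) ≤ (Q0 : ℝ) := by
    rw [hQ0]; push_cast
    rw [one_div, ← Finset.prod_inv_distrib]
    refine Finset.prod_le_prod (fun i _ => inv_nonneg.2 (lt_max_of_lt_left (hδp0 i)).le) fun i _ => ?_
    have := he1 i
    rwa [one_div] at this
  set μ0 : ℝ := 2 * min δ δ' * ∏ i, min (δp i) (δp' i) with hμ0
  have hμpos : 0 ≤ μ0 := by
    have : 0 ≤ ∏ i, min (δp i) (δp' i) := Finset.prod_nonneg fun i _ => (lt_min (hδp0 i) (hδp0' i)).le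
    have := lt_min hδ0 hδ0'
    positivity
  set T : Finset (ℕ × ℕ) := (dsS n ×ˢ dsS n').filter
    fun ab => (dsBx p n δ δp ab.1 ∩ dsBx p n' δ' δp' ab.2).Nonempty with hT
  set T1 := T.filter fun ab => ((ab.1 : ℤ) * n' - ab.2 * n) ≠ 0 with hT1
  set T2 := T.filter fun ab => ¬ ((ab.1 : ℤ) * n' - ab.2 * n) ≠ 0 with hT2
  have hsum : lamP r p ((ZP r p ∩ dsA p n δ δp) ∩ (ZP r p ∩ dsA p n' δ' δp')) ≤
      ENNReal.ofReal (T.card * μ0) := by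
    rw [ds_loc hinj hn hn2 hδ hδp, ds_loc hinj hn' hn2' hδ' hδp']
    calc _ ≤ lamP r p (⋃ ab ∈ T, dsBx p n δ δp ab.1 ∩ dsBx p n' δ' δp' ab.2) := by
          refine measure_mono ?_
          rintro x ⟨h1, h2⟩
          simp only [mem_iUnion, exists_prop] at h1 h2 ⊢
          obtain ⟨a, ha, hxa⟩ := h1
          obtain ⟨b, hb, hxb⟩ := h2
          exact ⟨(a, b), Finset.mem_filter.2 ⟨Finset.mem_product.2 ⟨ha, hb⟩, x, hxa, hxb⟩, hxa, hxb⟩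
      _ ≤ ∑ ab ∈ T, lamP r p (dsBx p n δ δp ab.1 ∩ dsBx p n' δ' δp' ab.2) := measure_biUnion_finset_le _ _
      _ ≤ ∑ ab ∈ T, ENNReal.ofReal μ0 := Finset.sum_le_sum fun ab _ =>
          dsBx_inter_meas _ _ _ _ hδ0 hδp0 hδ0' hδp0' hδp
      _ = ENNReal.ofReal (T.card * μ0) := by
          rw [Finset.sum_const, nsmul_eq_mul, ENNReal.ofReal_mul (p := (T.card : ℝ)) (by positivity), ENNReal.ofReal_natCast]
  refine hsum.trans (ENNReal.ofReal_le_ofReal ?_)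
  have hcard : (T.card : ℝ) = T1.card + T2.card := by
    rw [hT1, hT2, ← Nat.cast_add, Finset.card_filter_add_card_filter_not]
  have hc1 : (T1.card : ℝ) ≤ 4 * (max δ δ' * ∏ i, max (δp i) (δp' i)) * (n * n') := by
    have := ds_count (n := n) (n' := n') (Q0 := Q0) (by omega) (by omega) hQpos hQn
      (R := 2 * max δ δ' * (n * n')) (by have := lt_max_of_lt_left (b := δ) (c := δ') hδ0; positivity) T1 (by
      intro ab hab
      rw [hT1, Finset.mem_filter, hT, Finset.mem_filter, Finset.mem_product, mem_dsS, mem_dsS] at hab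
      obtain ⟨⟨⟨ha, hb⟩, x, hx1, hx2⟩, hd⟩ := hab
      rw [mem_dsBx] at hx1 hx2
      refine ⟨ha.1, hd, ?_, ?_⟩
      · have e1 : (((ab.1 : ℤ) * n' - ab.2 * n : ℤ) : ℝ) =
            ((x.1 - (ab.2 : ℝ) / n') - (x.1 - (ab.1 : ℝ) / n)) * (n * n') := by
          push_cast; field_simp; ring
        rw [e1, abs_mul, abs_of_pos (mul_pos hn0 hn0')]
        refine mul_lt_mul_of_pos_right ?_ (mul_pos hn0 hn0')
        have := abs_sub (x.1 - (ab.2 : ℝ) / n') (x.1 - (ab.1 : ℝ) / n)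
        have := le_max_left δ δ'
        have := le_max_right δ δ'
        linarith [hx1.1, hx2.1]
      · rw [hQ0]; push_cast
        refine Finset.prod_dvd_of_coprime ?_ fun i _ => ?_
        · intro i _ j _ hij
          refine IsCoprime.pow ?_
          exact Nat.isCoprime_iff_coprime.2
            ((Nat.coprime_primes (hpf i).out (hpf j).out).2 fun h => hij (hinj h))
        · rw [← Nat.cast_pow]
          apply he2
          have hnp : (n : ℚ_[p i]) ≠ 0 := by exact_mod_cast (by omega : n ≠ 0)
          have hnp' : (n' : ℚ_[p i]) ≠ 0 := by exact_mod_cast (by omega : n' ≠ 0)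
          have e1 : (((ab.1 : ℤ) * n' - ab.2 * n : ℤ) : ℚ_[p i]) =
            ((x.2 i - (ab.2 : ℚ_[p i]) / n') + -(x.2 i - (ab.1 : ℚ_[p i]) / n)) * (n * n') := by
            push_cast; field_simp; ring
          rw [e1, norm_mul, norm_mul, padic_norm_natCast_of_not_dvd _ _ (hn i),
            padic_norm_natCast_of_not_dvd _ _ (hn' i), mul_one, mul_one]
          refine (Padic.nonarchimedean _ _).trans_lt ?_
          rw [norm_neg]
          exact max_lt (lt_max_of_lt_right (hx2.2 i)) (lt_max_of_lt_left (hx1.2 i)))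
    refine this.trans ?_
    have hmx := lt_max_of_lt_left (b := δ) (c := δ') hδ0
    rw [div_le_iff₀ (by positivity)]
    rw [div_le_iff₀ hmaxp] at hQ1
    calc 2 * (2 * max δ δ' * (n * n')) = (4 * max δ δ' * (n * n')) * 1 := by ring
      _ ≤ (4 * max δ δ' * (n * n')) * (Q0 * ∏ i, max (δp i) (δp' i)) := by gcongr
      _ = _ := by ring
  have hc2 : (T2.card : ℝ) ≤ if n = n' then (n : ℝ) else 0 := by
    have hmem : ∀ ab ∈ T2, ab.1 = ab.2 ∧ n = n' ∧ ab.1 < n := by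
      intro ab hab
      rw [hT2, Finset.mem_filter, hT, Finset.mem_filter, Finset.mem_product, mem_dsS, mem_dsS] at hab
      obtain ⟨⟨⟨ha, hb⟩, -⟩, hd⟩ := hab
      have hd : ((ab.1 : ℤ) * n' - ab.2 * n) = 0 := not_not.1 hd
      have hd : ab.1 * n' = ab.2 * n := by exact_mod_cast sub_eq_zero.1 hd
      have d1 : n ∣ n' := by
        apply ha.2.dvd_of_dvd_mul_left (m := ab.1)
        exact ⟨ab.2, by rw [hd]; ring⟩
      have d2 : n' ∣ n := by
        apply hb.2.dvd_of_dvd_mul_left (m := ab.2)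
        exact ⟨ab.1, by rw [← hd]; ring⟩
      have d3 := Nat.dvd_antisymm d1 d2
      subst d3
      exact ⟨Nat.eq_of_mul_eq_mul_right (by omega) hd, rfl, ha.1⟩
    split_ifs with h
    · have : T2.card ≤ (Finset.range n).card := by
        refine Finset.card_le_card_of_injOn Prod.fst ?_ ?_
        · intro ab hab; simpa using (hmem ab hab).2.2
        · intro ab hab cd hcd h
          have h1 := (hmem ab hab).1
          have h2 := (hmem cd hcd).1
          exact Prod.ext h (by rw [← h1, ← h2]; exact h)
      rw [Finset.card_range] at this
      exact_mod_cast this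
    · have : T2 = ∅ := by
        rw [Finset.eq_empty_iff_forall_notMem]
        intro ab hab
        exact h (hmem ab hab).2.1
      rw [this]; simp
  rw [hcard, add_mul]
  refine add_le_add ?_ ?_
  · have ep : (∏ i, max (δp i) (δp' i)) * ∏ i, min (δp i) (δp' i) = (∏ i, δp i) * ∏ i, δp' i := by
      rw [← Finset.prod_mul_distrib, ← Finset.prod_mul_distrib]
      exact Finset.prod_congr rfl fun i _ => max_mul_min _ _
    calc (T1.card : ℝ) * μ0 ≤ (4 * (max δ δ' * ∏ i, max (δp i) (δp' i)) * (n * n')) * μ0 := by gcongr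
      _ = 8 * (max δ δ' * min δ δ') * ((∏ i, max (δp i) (δp' i)) * ∏ i, min (δp i) (δp' i)) * (n * n') := by
          rw [hμ0]; ring
      _ = _ := by rw [ep, max_mul_min]; ring
      _ ≤ _ := le_rfl
  · refine (mul_le_mul_of_nonneg_right hc2 hμpos).trans (le_of_eq ?_)
    split_ifs
    · rw [hμ0]; ring
    · simp

end DSOverlap

section DSMoment

open Topology

/-- decay function -/
noncomputable def dsH {r : ℕ} (k : Fin r → ℤ) : ℝ := ∏ i, (Real.sqrt (1 / 2)) ^ (k i).natAbs

lemma dsH_nonneg {r : ℕ} (k : Fin r → ℤ) : 0 ≤ dsH k :=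
  Finset.prod_nonneg fun _ _ => pow_nonneg (Real.sqrt_nonneg _) _

lemma dsH_neg {r : ℕ} (k : Fin r → ℤ) : dsH (-k) = dsH k := by simp [dsH]

lemma dsH_sum (r : ℕ) : ∃ C : ℝ, 0 ≤ C ∧ ∀ F : Finset (Fin r → ℤ), ∑ k ∈ F, dsH k ≤ C := by
  classical
  set θ := Real.sqrt (1 / 2) with hθ
  have hθ0 : 0 ≤ θ := Real.sqrt_nonneg _
  have hθ1 : θ < 1 := by
    rw [hθ, Real.sqrt_lt' one_pos]; norm_num
  have hs : Summable fun k : ℤ => θ ^ k.natAbs := by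
    apply Summable.of_nat_of_neg <;> simpa using summable_geometric_of_lt_one hθ0 hθ1
  refine ⟨∏ i : Fin r, ∑' k : ℤ, θ ^ k.natAbs, Finset.prod_nonneg fun _ _ => tsum_nonneg fun _ => pow_nonneg hθ0 _,
    fun F => ?_⟩
  have hsub : F ⊆ Fintype.piFinset fun i : Fin r => F.image fun k => k i := by
    intro k hk
    rw [Fintype.mem_piFinset]
    intro i
    exact Finset.mem_image_of_mem _ hk
  calc ∑ k ∈ F, dsH k ≤ ∑ k ∈ Fintype.piFinset fun i : Fin r => F.image fun k => k i, dsH k :=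
        Finset.sum_le_sum_of_subset_of_nonneg hsub fun k _ _ => dsH_nonneg k
    _ = ∏ i : Fin r, ∑ j ∈ F.image fun k => k i, θ ^ j.natAbs := by
        rw [Finset.prod_univ_sum]; rfl
    _ ≤ _ := Finset.prod_le_prod (fun i _ => Finset.sum_nonneg fun _ _ => pow_nonneg hθ0 _)
        fun i _ => hs.sum_le_tsum _ fun _ _ => pow_nonneg hθ0 _

lemma dsH_bound {r : ℕ} {p : Fin r → ℕ} [hpf : ∀ i, Fact (p i).Prime] (k : Fin r → ℤ) {t0 : ℝ}
    (ht0 : t0 = ∏ i, (p i : ℝ) ^ (- k i)) :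
    min 1 t0 * ∏ i, min 1 ((p i : ℝ) ^ k i) ≤ dsH k := by
  have hp2 : ∀ i, (2 : ℝ) ≤ p i := fun i => by exact_mod_cast (hpf i).out.two_le
  have hp0 : ∀ i, (0 : ℝ) < p i := fun i => by linarith [hp2 i]
  have ht : 0 < t0 := by rw [ht0]; exact Finset.prod_pos fun i _ => zpow_pos (hp0 i) _
  have hz : ∀ i, 0 < (p i : ℝ) ^ k i := fun i => zpow_pos (hp0 i) _
  set X := min 1 t0 * ∏ i, min 1 ((p i : ℝ) ^ k i) with hX
  have hmin : 0 < ∏ i, min 1 ((p i : ℝ) ^ k i) := Finset.prod_pos fun i _ => lt_min one_pos (hz i)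
  have hmax : 0 < ∏ i, max 1 ((p i : ℝ) ^ k i) := Finset.prod_pos fun i _ => lt_max_of_lt_left one_pos
  have hX0 : 0 < X := mul_pos (lt_min one_pos ht) hmin
  have hXY : X * (max 1 t0 * ∏ i, max 1 ((p i : ℝ) ^ k i)) = 1 := by
    have : X * (max 1 t0 * ∏ i, max 1 ((p i : ℝ) ^ k i)) =
      (min 1 t0 * max 1 t0) * ∏ i, (min 1 ((p i : ℝ) ^ k i) * max 1 ((p i : ℝ) ^ k i)) := by
      rw [Finset.prod_mul_distrib, hX]; ring
    rw [this]
    simp_rw [min_mul_max, one_mul]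
    rw [ht0, ← Finset.prod_mul_distrib]
    refine Finset.prod_eq_one fun i _ => ?_
    rw [← zpow_add₀ (hp0 i).ne']; simp
  have h1 : X ≤ ∏ i, min 1 ((p i : ℝ) ^ k i) := mul_le_of_le_one_left hmin.le (min_le_left _ _)
  have h2 : X * ∏ i, max 1 ((p i : ℝ) ^ k i) ≤ 1 := by
    refine le_trans ?_ hXY.le
    refine mul_le_mul_of_nonneg_left ?_ hX0.le
    exact le_mul_of_one_le_left hmax.le (le_max_left _ _)
  have h3 : ∏ i, min 1 ((p i : ℝ) ^ k i) ≤ dsH k ^ 2 * ∏ i, max 1 ((p i : ℝ) ^ k i) := by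
    rw [dsH, ← Finset.prod_pow, ← Finset.prod_mul_distrib]
    refine Finset.prod_le_prod (fun i _ => (lt_min one_pos (hz i)).le) fun i _ => ?_
    rw [← pow_mul, mul_comm (k i).natAbs 2, pow_mul, Real.sq_sqrt (by norm_num)]
    rcases le_total 0 (k i) with h | h
    · obtain ⟨a, ha⟩ := Int.eq_ofNat_of_zero_le h
      rw [ha]; simp only [zpow_natCast, Int.natAbs_natCast]
      have : (1 : ℝ) ≤ (p i : ℝ) ^ a := one_le_pow₀ (by linarith [hp2 i])
      rw [min_eq_left this, max_eq_right this]
      rw [div_pow, one_pow, div_mul_eq_mul_div, one_mul, le_div_iff₀ (by positivity), one_mul]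
      exact pow_le_pow_left₀ (by norm_num) (hp2 i) _
    · obtain ⟨a, ha⟩ := Int.eq_ofNat_of_zero_le (neg_nonneg.2 h)
      have ha : k i = -(a : ℤ) := by omega
      rw [ha]; simp only [zpow_neg, zpow_natCast, Int.natAbs_neg, Int.natAbs_natCast]
      have : ((p i : ℝ) ^ a)⁻¹ ≤ 1 := inv_le_one_of_one_le₀ (one_le_pow₀ (by linarith [hp2 i]))
      rw [min_eq_right this, max_eq_left this, mul_one, div_pow, one_pow, one_div]
      gcongr
      exact hp2 i
  have h4 : X * X ≤ dsH k * dsH k := by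
    calc X * X ≤ X * (dsH k ^ 2 * ∏ i, max 1 ((p i : ℝ) ^ k i)) := by
          gcongr; exact h1.trans h3
      _ = dsH k ^ 2 * (X * ∏ i, max 1 ((p i : ℝ) ^ k i)) := by ring
      _ ≤ dsH k ^ 2 * 1 := by gcongr
      _ = _ := by ring
  exact (mul_self_le_mul_self_iff hX0.le (dsH_nonneg k)).2 h4

lemma ds_second {Ω : Type*} [MeasurableSpace Ω] (μ : Measure Ω) [IsFiniteMeasure μ] (F : Finset ℕ)
    (B : ℕ → Set Ω) (hB : ∀ k, MeasurableSet (B k)) {c C W : ℝ} (hc : 0 < c) (hC : 0 < C) (hW : 0 < W)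
    (h1 : c * W ≤ ∑ k ∈ F, μ.real (B k))
    (h2 : ∑ k ∈ F, ∑ l ∈ F, μ.real (B k ∩ B l) ≤ C * W ^ 2) :
    c ^ 2 / (4 * C) ≤ μ.real (⋃ k ∈ F, B k) := by
  set U := ⋃ k ∈ F, B k with hU
  have hUm : MeasurableSet U := Finset.measurableSet_biUnion _ fun k _ => hB k
  let f : Ω → ℝ := fun x => ∑ k ∈ F, (B k).indicator 1 x
  have hi : ∀ S : Set Ω, MeasurableSet S → Integrable (S.indicator (1 : Ω → ℝ)) μ := fun S hS =>
    (integrable_const (1 : ℝ)).indicator hS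
  have hf : ∫ x, f x ∂μ = ∑ k ∈ F, μ.real (B k) := by
    rw [integral_finsetSum _ fun k _ => hi _ (hB k)]
    exact Finset.sum_congr rfl fun k _ => integral_indicator_one (hB k)
  have hff : ∀ x, f x ^ 2 = ∑ k ∈ F, ∑ l ∈ F, (B k ∩ B l).indicator (1 : Ω → ℝ) x := by
    intro x
    rw [sq, Finset.sum_mul_sum]
    refine Finset.sum_congr rfl fun k _ => Finset.sum_congr rfl fun l _ => ?_
    rw [Set.inter_indicator_one]; rfl
  have hfi : Integrable f μ := integrable_finsetSum _ fun k _ => hi _ (hB k)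
  have hffi : Integrable (fun x => f x ^ 2) μ := by
    simp_rw [hff]
    exact integrable_finsetSum _ fun k _ => integrable_finsetSum _ fun l _ => hi _ ((hB k).inter (hB l))
  have hf2 : ∫ x, f x ^ 2 ∂μ = ∑ k ∈ F, ∑ l ∈ F, μ.real (B k ∩ B l) := by
    simp_rw [hff]
    rw [integral_finsetSum _ fun k _ => integrable_finsetSum _ fun l _ => hi _ ((hB k).inter (hB l))]
    refine Finset.sum_congr rfl fun k _ => ?_
    rw [integral_finsetSum _ fun l _ => hi _ ((hB k).inter (hB l))]
    exact Finset.sum_congr rfl fun l _ => integral_indicator_one ((hB k).inter (hB l))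
  set t : ℝ := 2 * C * W / c with ht
  have ht0 : 0 < t := by positivity
  have hpt : ∀ x, f x ≤ t * U.indicator (1 : Ω → ℝ) x + t⁻¹ * f x ^ 2 := by
    intro x
    by_cases hx : x ∈ U
    · rw [indicator_of_mem hx, Pi.one_apply, mul_one]
      have : t * (t + t⁻¹ * f x ^ 2 - f x) = (t - f x / 2) ^ 2 + 3 / 4 * f x ^ 2 := by
        field_simp; ring
      have h3 : 0 ≤ t * (t + t⁻¹ * f x ^ 2 - f x) := by rw [this]; positivity
      have := nonneg_of_mul_nonneg_right h3 ht0
      linarith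
    · have : f x = 0 := Finset.sum_eq_zero fun k hk => indicator_of_notMem
        (fun h => hx (mem_biUnion (s := (F : Set ℕ)) hk h)) _
      rw [this, indicator_of_notMem hx]; simp
  have h3 := integral_mono hfi (((hi U hUm).const_mul t).add (hffi.const_mul t⁻¹)) hpt
  have h4 : ∫ x, (t * U.indicator (1 : Ω → ℝ) x + t⁻¹ * f x ^ 2) ∂μ =
      t * μ.real U + t⁻¹ * ∑ k ∈ F, ∑ l ∈ F, μ.real (B k ∩ B l) := by
    rw [integral_add ((hi U hUm).const_mul t) (hffi.const_mul t⁻¹), integral_const_mul, integral_const_mul,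
      hf2, integral_indicator_one hUm]
  have h5 : c * W ≤ t * μ.real U + t⁻¹ * (C * W ^ 2) := by
    calc c * W ≤ ∫ x, f x ∂μ := by rw [hf]; exact h1
      _ ≤ _ := h3
      _ = _ := h4
      _ ≤ _ := by gcongr
  have h6 : t⁻¹ * (C * W ^ 2) = c * W / 2 := by rw [ht]; field_simp
  have h7 : c * W / 2 ≤ t * μ.real U := by linarith
  rw [ht] at h7
  have h8 : 2 * C * W / c * (c ^ 2 / (4 * C)) ≤ 2 * C * W / c * μ.real U := by
    refine le_trans (le_of_eq ?_) h7
    field_simp; ring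
  exact le_of_mul_le_mul_left h8 (by positivity)

end DSMoment

section DSCore

open Topology

/-- real radius -/
noncomputable def dsdel {r : ℕ} (p : Fin r → ℕ) (n : ℕ) (ν : Fin r → ℤ) (ψ : ℝ) : ℝ :=
  ψ / (n * ∏ i, (p i : ℝ) ^ ν i)

/-- p-adic radii -/
noncomputable def dsdelp {r : ℕ} (p : Fin r → ℕ) (ν : Fin r → ℤ) (ψ : ℝ) (i : Fin r) : ℝ :=
  ψ * (p i : ℝ) ^ ν i

variable {r : ℕ} {p : Fin r → ℕ} [hpf : ∀ i, Fact (p i).Prime]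

lemma ds_u_pos (ν : Fin r → ℤ) : 0 < ∏ i, (p i : ℝ) ^ ν i :=
  Finset.prod_pos fun i _ => zpow_pos (by exact_mod_cast (hpf i).out.pos) _

lemma dsdel_prod {n : ℕ} (hn : n ≠ 0) (ν : Fin r → ℤ) (ψ : ℝ) :
    n * (dsdel p n ν ψ * ∏ i, dsdelp p ν ψ i) = ψ ^ (r + 1) := by
  have := ds_u_pos (p := p) ν
  have hn0 : (n : ℝ) ≠ 0 := by exact_mod_cast hn
  simp only [dsdel, dsdelp, Finset.prod_mul_distrib, Finset.prod_const, Finset.card_univ, Fintype.card_fin]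
  field_simp
  ring

lemma dsdel_min {n : ℕ} (hn : n ≠ 0) (ν ν' : Fin r → ℤ) {ψ ψ' : ℝ} (h : 0 < ψ) (h' : 0 < ψ') :
    n * (min (dsdel p n ν ψ) (dsdel p n ν' ψ') * ∏ i, min (dsdelp p ν ψ i) (dsdelp p ν' ψ' i)) ≤
      (ψ ^ (r + 1) + ψ' ^ (r + 1)) * dsH (ν' - ν) := by
  have hp0 : ∀ i, (0 : ℝ) < p i := fun i => by exact_mod_cast (hpf i).out.pos
  have hu := ds_u_pos (p := p) ν
  have hu' := ds_u_pos (p := p) ν'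
  have hn0 : (0 : ℝ) < n := by positivity
  set Ψ := max ψ ψ' with hΨ
  have hΨ0 : 0 < Ψ := lt_max_of_lt_left h
  set u := ∏ i, (p i : ℝ) ^ ν i with hud
  set u' := ∏ i, (p i : ℝ) ^ ν' i with hud'
  have h1 : min (dsdel p n ν ψ) (dsdel p n ν' ψ') ≤ Ψ / (n * u) * min 1 (u / u') := by
    rw [mul_min_of_nonneg _ _ (by positivity)]
    refine min_le_min ?_ ?_
    · rw [mul_one, dsdel]; gcongr; exact le_max_left _ _
    · have e : Ψ / (n * u) * (u / u') = Ψ / (n * u') := by field_simp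
      rw [e, dsdel]; gcongr; exact le_max_right _ _
  have h2 : ∀ i, min (dsdelp p ν ψ i) (dsdelp p ν' ψ' i) ≤
      Ψ * (p i : ℝ) ^ ν i * min 1 ((p i : ℝ) ^ (ν' - ν) i) := by
    intro i
    have := zpow_pos (hp0 i) (ν i)
    rw [mul_min_of_nonneg _ _ (by positivity)]
    refine min_le_min ?_ ?_
    · rw [mul_one, dsdelp]; gcongr; exact le_max_left _ _
    · rw [mul_assoc, ← zpow_add₀ (hp0 i).ne', dsdelp, Pi.sub_apply, add_sub_cancel]
      have := zpow_pos (hp0 i) (ν' i)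
      gcongr; exact le_max_right _ _
  have h3 := dsH_bound (p := p) (ν' - ν) (t0 := u / u') (by
    rw [hud, hud', ← Finset.prod_div_distrib]
    refine Finset.prod_congr rfl fun i _ => ?_
    rw [Pi.sub_apply, neg_sub, zpow_sub₀ (hp0 i).ne'])
  have h4 : 0 ≤ ∏ i, min (dsdelp p ν ψ i) (dsdelp p ν' ψ' i) := Finset.prod_nonneg fun i _ => by
    have a1 := zpow_pos (hp0 i) (ν i)
    have a2 := zpow_pos (hp0 i) (ν' i)
    exact le_min (by rw [dsdelp]; positivity) (by rw [dsdelp]; positivity)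
  have h5 : 0 ≤ min 1 (u / u') := le_min zero_le_one (by positivity)
  calc _ ≤ n * ((Ψ / (n * u) * min 1 (u / u')) * ∏ i, (Ψ * (p i : ℝ) ^ ν i * min 1 ((p i : ℝ) ^ (ν' - ν) i))) := by
        refine mul_le_mul_of_nonneg_left ?_ hn0.le
        refine mul_le_mul h1 (Finset.prod_le_prod (fun i _ => ?_) fun i _ => h2 i) h4 (by positivity)
        have a1 := zpow_pos (hp0 i) (ν i)
        have a2 := zpow_pos (hp0 i) (ν' i)
        exact le_min (by rw [dsdelp]; positivity) (by rw [dsdelp]; positivity)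
    _ = Ψ ^ (r + 1) * (min 1 (u / u') * ∏ i, min 1 ((p i : ℝ) ^ (ν' - ν) i)) := by
        rw [Finset.prod_mul_distrib, Finset.prod_mul_distrib, ← hud, Finset.prod_const, Finset.card_univ,
          Fintype.card_fin]
        field_simp
        ring
    _ ≤ Ψ ^ (r + 1) * dsH (ν' - ν) := by gcongr
    _ ≤ _ := by
        refine mul_le_mul_of_nonneg_right ?_ (dsH_nonneg _)
        rcases max_choice ψ ψ' with e | e <;> rw [hΨ, e]
        · have := pow_pos h' (r + 1); linarith
        · have := pow_pos h (r + 1); linarith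

lemma ds_core (hinj : Function.Injective p) {n : ℕ → ℕ} {ν : ℕ → Fin r → ℤ} {ψ : ℕ → ℝ}
    (hinjJ : ∀ k l, n k = n l → ν k = ν l → k = l)
    (hψ : ∀ k, 0 < ψ k) (hn : ∀ k i, ¬ p i ∣ n k) (hn2 : ∀ k, 2 ≤ n k)
    {c : ℝ} (hc : 0 < c) (hφ : ∀ k, c * n k ≤ Nat.totient (n k))
    (hδ : ∀ k, dsdel p (n k) (ν k) (ψ k) ≤ 1 / (2 * n k)) (hδp : ∀ k i, dsdelp p (ν k) (ψ k) i ≤ 1)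
    (hdiv : ¬ Summable fun k => ψ k ^ (r + 1)) :
    lamP r p (ZP r p ∩ dsE p n (fun k => dsdel p (n k) (ν k) (ψ k)) (fun k => dsdelp p (ν k) (ψ k))) ≠ 0 := by
  classical
  have hp0 : ∀ i, (0 : ℝ) < p i := fun i => by exact_mod_cast (hpf i).out.pos
  obtain ⟨Ch, hCh0, hCh⟩ := dsH_sum r
  set μ : Measure (QP r p) := lamP r p with hμ
  have hZm : MeasurableSet (ZP r p) := by rw [ZP_eq]; exact dsSlab_measurable _ _
  set A : ℕ → Set (QP r p) := fun k => dsA p (n k) (dsdel p (n k) (ν k) (ψ k)) (dsdelp p (ν k) (ψ k)) with hA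
  set B : ℕ → Set (QP r p) := fun k => ZP r p ∩ A k with hB
  set w : ℕ → ℝ := fun k => ψ k ^ (r + 1) with hw
  have hw0 : ∀ k, 0 < w k := fun k => pow_pos (hψ k) _
  have hBm : ∀ k, MeasurableSet (B k) := fun k => hZm.inter (dsA_open _ _ _).measurableSet
  have hfin : IsFiniteMeasure (μ.restrict (ZP r p)) := ⟨by
    rw [Measure.restrict_apply_univ, hμ, ZP_meas]; exact ENNReal.one_lt_top⟩
  have hres : ∀ S ⊆ ZP r p, (μ.restrict (ZP r p)) S = μ S := fun S hS =>
    Measure.restrict_eq_self _ hS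
  have hδ0 : ∀ k, 0 < dsdel p (n k) (ν k) (ψ k) := fun k => by
    have := ds_u_pos (p := p) (ν k)
    have : (0 : ℝ) < n k := by exact_mod_cast (by have := hn2 k; omega : 0 < n k)
    have := hψ k
    rw [dsdel]; positivity
  have hδp0 : ∀ k i, 0 < dsdelp p (ν k) (ψ k) i := fun k i => mul_pos (hψ k) (zpow_pos (hp0 i) _)
  have hPp : 0 < ∏ i, (p i : ℝ) := Finset.prod_pos fun i _ => hp0 i
  set c' : ℝ := 2 * c / ∏ i, (p i : ℝ) with hc'
  have hc'0 : 0 < c' := by positivity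
  have hlow : ∀ k, c' * w k ≤ (μ.restrict (ZP r p)).real (B k) := by
    intro k
    rw [Measure.real, hres _ inter_subset_left]
    have h1 := ds_lower hinj (hn k) (hn2 k) (hδ0 k) (hδp0 k) (hδ k) (hδp k)
    have hne : μ (B k) ≠ ⊤ := ne_top_of_le_ne_top (by rw [hμ, ZP_meas]; simp)
      (measure_mono inter_subset_left)
    rw [← ENNReal.ofReal_le_iff_le_toReal hne]
    refine le_trans (ENNReal.ofReal_le_ofReal ?_) h1
    have hprod := dsdel_prod (p := p) (n := n k) (by have := hn2 k; omega) (ν k) (ψ k)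
    have hw' : w k = n k * (dsdel p (n k) (ν k) (ψ k) * ∏ i, dsdelp p (ν k) (ψ k) i) := hprod.symm
    rw [hw', hc']
    have hx : 0 ≤ dsdel p (n k) (ν k) (ψ k) * ∏ i, dsdelp p (ν k) (ψ k) i :=
      mul_nonneg (hδ0 k).le (Finset.prod_nonneg fun i _ => (hδp0 k i).le)
    calc _ = 2 * (c * n k) * (dsdel p (n k) (ν k) (ψ k) * ∏ i, dsdelp p (ν k) (ψ k) i) / ∏ i, (p i : ℝ) := by
          ring
      _ ≤ 2 * (Nat.totient (n k)) * (dsdel p (n k) (ν k) (ψ k) * ∏ i, dsdelp p (ν k) (ψ k) i) / ∏ i, (p i : ℝ) := by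
          gcongr; exact hφ k
      _ = _ := by ring
  have hup : ∀ k l, (μ.restrict (ZP r p)).real (B k ∩ B l) ≤ 8 * (w k * w l) +
      if n k = n l then 2 * ((w k + w l) * dsH (ν l - ν k)) else 0 := by
    intro k l
    rw [Measure.real, hres _ (inter_subset_left.trans inter_subset_left)]
    have h1 := ds_overlap hinj (hn k) (hn2 k) (hn l) (hn2 l) (hδ0 k) (hδp0 k) (hδ0 l) (hδp0 l) (hδ k) (hδp k)
      (hδ l) (hδp l)
    have hnk : n k ≠ 0 := by have := hn2 k; omega
    have hnl : n l ≠ 0 := by have := hn2 l; omega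
    rw [dsdel_prod hnk, dsdel_prod hnl] at h1
    have hpos : 0 ≤ 8 * (w k * w l) +
      if n k = n l then 2 * ((w k + w l) * dsH (ν l - ν k)) else 0 := by
      have := hw0 k
      have := hw0 l
      have := dsH_nonneg (ν l - ν k)
      split_ifs <;> positivity
    refine ENNReal.toReal_le_of_le_ofReal hpos (h1.trans (ENNReal.ofReal_le_ofReal ?_))
    refine add_le_add le_rfl ?_
    split_ifs with h
    · rw [← h]
      have := dsdel_min (p := p) hnk (ν k) (ν l) (hψ k) (hψ l)
      exact mul_le_mul_of_nonneg_left this zero_le_two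
    · exact le_rfl
  have hinner : ∀ (F : Finset ℕ) k, ∑ l ∈ F, (if n k = n l then dsH (ν l - ν k) else 0) ≤ Ch := by
    intro F k
    rw [← Finset.sum_filter]
    rw [← Finset.sum_image (f := dsH) (g := fun l => ν l - ν k)]
    · exact hCh _
    · intro a ha b hb hab
      rw [Finset.mem_coe, Finset.mem_filter] at ha hb
      exact hinjJ a b (ha.2.symm.trans hb.2) (sub_left_injective hab)
  set C : ℝ := 8 + 4 * Ch with hC
  have hC0 : 0 < C := by positivity
  have hmain : ∀ F : Finset ℕ, 1 ≤ ∑ k ∈ F, w k →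
      c' ^ 2 / (4 * C) ≤ (μ.restrict (ZP r p)).real (⋃ k ∈ F, B k) := by
    intro F hF
    set W := ∑ k ∈ F, w k with hW
    refine ds_second (W := W) _ F B hBm hc'0 hC0 (by linarith) ?_ ?_
    · rw [hW, Finset.mul_sum]; exact Finset.sum_le_sum fun k _ => hlow k
    · calc _ ≤ ∑ k ∈ F, ∑ l ∈ F, (8 * (w k * w l) +
          if n k = n l then 2 * ((w k + w l) * dsH (ν l - ν k)) else 0) :=
            Finset.sum_le_sum fun k _ => Finset.sum_le_sum fun l _ => hup k l
        _ = ∑ k ∈ F, ∑ l ∈ F, (8 * (w k * w l) +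
            (2 * (w k * if n k = n l then dsH (ν l - ν k) else 0) +
            2 * (w l * if n l = n k then dsH (ν k - ν l) else 0))) := by
            refine Finset.sum_congr rfl fun k _ => Finset.sum_congr rfl fun l _ => ?_
            congr 1
            by_cases h : n k = n l
            · rw [if_pos h, if_pos h, if_pos h.symm, ← dsH_neg (ν k - ν l), neg_sub]; ring
            · rw [if_neg h, if_neg h, if_neg (Ne.symm h)]; ring
        _ = 8 * W ^ 2 + (2 * ∑ k ∈ F, w k * ∑ l ∈ F, (if n k = n l then dsH (ν l - ν k) else 0) +
            2 * ∑ k ∈ F, w k * ∑ l ∈ F, (if n k = n l then dsH (ν l - ν k) else 0)) := by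
            simp_rw [Finset.sum_add_distrib]
            congr 1
            · rw [hW, sq, Finset.sum_mul_sum, Finset.mul_sum]
              simp_rw [Finset.mul_sum]
            · congr 1
              · simp_rw [Finset.mul_sum]
              · rw [Finset.sum_comm]
                simp_rw [Finset.mul_sum]
        _ ≤ 8 * W ^ 2 + (2 * ∑ k ∈ F, w k * Ch + 2 * ∑ k ∈ F, w k * Ch) := by
            have : ∑ k ∈ F, w k * ∑ l ∈ F, (if n k = n l then dsH (ν l - ν k) else 0) ≤ ∑ k ∈ F, w k * Ch :=
              Finset.sum_le_sum fun k _ => mul_le_mul_of_nonneg_left (hinner F k) (hw0 k).le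
            gcongr
        _ = 8 * W ^ 2 + 4 * Ch * W := by rw [← Finset.sum_mul]; ring
        _ ≤ C * W ^ 2 := by rw [hC]; nlinarith [mul_nonneg hCh0 (by linarith : 0 ≤ W), mul_nonneg (mul_nonneg hCh0 (by linarith : 0 ≤ W)) (by linarith : 0 ≤ W - 1)]
  have htail : ∀ N, ENNReal.ofReal (c' ^ 2 / (4 * C)) ≤ (μ.restrict (ZP r p)) (⋃ k ≥ N, B k) := by
    intro N
    have h1 := (not_summable_iff_tendsto_nat_atTop_of_nonneg fun k => (hw0 k).le).1 hdiv
    obtain ⟨M, hM1, hM2⟩ := ((h1.eventually_ge_atTop (1 + ∑ k ∈ Finset.range N, w k)).and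
      (eventually_ge_atTop N)).exists
    have h2 : 1 ≤ ∑ k ∈ Finset.Ico N M, w k := by
      rw [Finset.sum_Ico_eq_sub _ hM2]; linarith
    have h3 := hmain _ h2
    rw [Measure.real, ← ENNReal.ofReal_le_iff_le_toReal (measure_ne_top _ _)] at h3
    refine h3.trans (measure_mono ?_)
    refine iUnion₂_subset fun k hk => ?_
    exact subset_iUnion₂_of_subset k (Finset.mem_Ico.1 hk).1 Subset.rfl
  have hanti : Antitone fun N => ⋃ k ≥ N, B k := by
    intro N M hNM
    exact iUnion₂_subset fun k hk => subset_iUnion₂_of_subset k (hNM.trans hk) Subset.rfl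
  have hmeas : ∀ N, MeasurableSet (⋃ k ≥ N, B k) := fun N =>
    MeasurableSet.iUnion fun k => MeasurableSet.iUnion fun _ => hBm k
  have hinf := hanti.measure_iInter (μ := μ.restrict (ZP r p)) (fun N => (hmeas N).nullMeasurableSet)
    ⟨0, measure_ne_top _ _⟩
  have hE : (⋂ N, ⋃ k ≥ N, B k) ⊆ ZP r p ∩ dsE p n (fun k => dsdel p (n k) (ν k) (ψ k)) (fun k => dsdelp p (ν k) (ψ k)) := by
    intro x hx
    simp only [mem_iInter, mem_iUnion, exists_prop] at hx
    refine ⟨(hx 0).choose_spec.2.1, ?_⟩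
    show ∃ᶠ k in atTop, x ∈ A k
    rw [frequently_atTop]
    intro N
    obtain ⟨k, hk, hxk⟩ := hx N
    exact ⟨k, hk, hxk.2⟩
  have hge : ENNReal.ofReal (c' ^ 2 / (4 * C)) ≤ (μ.restrict (ZP r p)) (⋂ N, ⋃ k ≥ N, B k) := by
    rw [hinf]; exact le_iInf htail
  have hpos : 0 < ENNReal.ofReal (c' ^ 2 / (4 * C)) := ENNReal.ofReal_pos.2 (by positivity)
  refine (lt_of_lt_of_le hpos (hge.trans ((Measure.restrict_le_self _).trans (measure_mono hE)))).ne'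

end DSCore

section DSStruct

open Topology

variable {r : ℕ} {p : Fin r → ℕ} [hpf : ∀ i, Fact (p i).Prime]

lemma ds_strip (hinj : Function.Injective p) {x : ℕ} (hx : x ≠ 0) :
    ∃ y, x = y * ∏ i, p i ^ x.factorization (p i) ∧ ∀ i, ¬ p i ∣ y := by
  have h1 : (∏ i, p i ^ x.factorization (p i)) ∣ x := by
    refine Finset.prod_dvd_of_isRelPrime ?_ fun i _ => Nat.ordProj_dvd _ _
    intro i _ j _ hij
    exact Nat.coprime_iff_isRelPrime.1 (Nat.Coprime.pow _ _
        ((Nat.coprime_primes (hpf i).out (hpf j).out).2 fun h => hij (hinj h)))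
  obtain ⟨y, hy⟩ := h1
  refine ⟨y, by rw [mul_comm]; exact hy, fun i hi => ?_⟩
  apply Nat.pow_succ_factorization_not_dvd hx (hpf i).out
  rw [pow_succ]
  have h2 : p i ^ x.factorization (p i) * p i ∣ (∏ i, p i ^ x.factorization (p i)) * y :=
    mul_dvd_mul (Finset.dvd_prod_of_mem (fun i => p i ^ x.factorization (p i)) (Finset.mem_univ i)) hi
  rwa [← hy] at h2

lemma ds_struct (hinj : Function.Injective p) {γ : ℚ} (hγ : γ ∈ PinvZ r p) (h0 : γ ≠ 0) :
    |γ| = (unitPart r p γ : ℚ) * ∏ i, (p i : ℚ) ^ (padicValRat (p i) γ) ∧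
      (∀ i, ¬ p i ∣ unitPart r p γ) ∧ unitPart r p γ ≠ 0 := by
  have hp0 : ∀ i, (p i : ℚ) ≠ 0 := fun i => by exact_mod_cast (hpf i).out.ne_zero
  set a := γ.num.natAbs with ha
  set d := γ.den with hd
  have ha0 : a ≠ 0 := Int.natAbs_ne_zero.2 (Rat.num_ne_zero.2 h0)
  have hd0 : d ≠ 0 := γ.den_nz
  -- den
  have hden : d = ∏ i, p i ^ d.factorization (p i) := by
    obtain ⟨n0, ν0, hγe⟩ := hγ
    have hdd : d ∣ ∏ i, p i ^ (ν0 i).natAbs := by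
      have e : γ = Rat.divInt (n0 * ∏ i, (p i : ℤ) ^ (ν0 i + (ν0 i).natAbs).toNat)
          ((∏ i, p i ^ (ν0 i).natAbs : ℕ) : ℤ) := by
        rw [Rat.divInt_eq_div, eq_div_iff (by
          push_cast; exact Finset.prod_ne_zero_iff.2 fun i _ => pow_ne_zero _ (hp0 i)), hγe]
        push_cast
        rw [mul_assoc, ← Finset.prod_mul_distrib]
        congr 1
        refine Finset.prod_congr rfl fun i _ => ?_
        rw [← zpow_natCast, ← zpow_add₀ (hp0 i), ← zpow_natCast]
        congr 1
        rw [Int.toNat_of_nonneg (by have := neg_abs_le (ν0 i); linarith)]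
        simp
      have := Rat.den_dvd (n0 * ∏ i, (p i : ℤ) ^ (ν0 i + (ν0 i).natAbs).toNat)
          ((∏ i, p i ^ (ν0 i).natAbs : ℕ) : ℤ)
      rw [← e] at this
      exact_mod_cast this
    obtain ⟨y, hy1, hy2⟩ := ds_strip hinj hd0
    have hyd : y ∣ ∏ i, p i ^ (ν0 i).natAbs := Dvd.dvd.trans ⟨_, hy1⟩ hdd
    have hyc : Nat.Coprime y (∏ i, p i ^ (ν0 i).natAbs) := Nat.Coprime.prod_right fun i _ =>
      Nat.Coprime.pow_right _ (((hpf i).out.coprime_iff_not_dvd).2 (hy2 i)).symm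
    have hy : y = 1 := Nat.Coprime.eq_one_of_dvd hyc hyd
    rw [hy, one_mul] at hy1
    exact hy1
  obtain ⟨y, hy1, hy2⟩ := ds_strip hinj (mul_ne_zero ha0 hd0)
  have hP0 : 0 < ∏ i, p i ^ (a * d).factorization (p i) :=
    Finset.prod_pos fun i _ => pow_pos (hpf i).out.pos _
  have hu : unitPart r p γ = y := by
    unfold unitPart
    rw [← ha, ← hd]
    exact Nat.div_eq_of_eq_mul_left hP0 hy1
  rw [hu]
  refine ⟨?_, hy2, ?_⟩
  · have hval : ∀ i, padicValRat (p i) γ = (a.factorization (p i) : ℤ) - d.factorization (p i) := by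
      intro i
      rw [padicValRat_def, padicValInt, ← ha, ← hd, Nat.factorization_def _ (hpf i).out,
        Nat.factorization_def _ (hpf i).out]
    have habs : |γ| = (a : ℚ) / d := by
      conv_lhs => rw [← Rat.num_div_den γ]
      rw [abs_div, Nat.abs_cast, ha, Nat.cast_natAbs, Int.cast_abs]
    have hdq : (d : ℚ) = ∏ i, (p i : ℚ) ^ d.factorization (p i) := by
      conv_lhs => rw [hden]
      push_cast; rfl
    have hyq : (a : ℚ) * d = y * ∏ i, (p i : ℚ) ^ (a * d).factorization (p i) := by
      exact_mod_cast hy1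
    have hd0q : (d : ℚ) ≠ 0 := by exact_mod_cast hd0
    rw [habs, div_eq_iff hd0q]
    apply mul_right_cancel₀ hd0q
    rw [hyq]
    rw [mul_assoc, mul_assoc]
    congr 1
    conv_rhs => rw [hdq]
    rw [← Finset.prod_mul_distrib, ← Finset.prod_mul_distrib]
    refine Finset.prod_congr rfl fun i _ => ?_
    rw [hval, Nat.factorization_mul ha0 hd0, Finsupp.add_apply, ← zpow_natCast, ← zpow_natCast,
      ← zpow_add₀ (hp0 i), ← zpow_add₀ (hp0 i)]
    congr 1
    push_cast; ring
  · rintro rfl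
    rw [zero_mul] at hy1
    exact mul_ne_zero ha0 hd0 hy1

lemma ds_norm {γ : ℚ} (h0 : γ ≠ 0) (i : Fin r) :
    ‖(γ : ℚ_[p i])‖ = (p i : ℝ) ^ (-padicValRat (p i) γ) := by
  rw [Padic.eq_padicNorm, padicNorm.eq_zpow_of_nonzero h0]
  push_cast; rfl

/-- the exponents -/
def dsnu {r : ℕ} (p : Fin r → ℕ) (γ : ℚ) : Fin r → ℤ := fun i => padicValRat (p i) γ

lemma ds_abs (hinj : Function.Injective p) {γ : ℚ} (hγ : γ ∈ PinvZ r p) (h0 : γ ≠ 0) :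
    |(γ : ℝ)| = (unitPart r p γ : ℝ) * ∏ i, (p i : ℝ) ^ (dsnu p γ i) := by
  have := (ds_struct hinj hγ h0).1
  have h : ((|γ| : ℚ) : ℝ) = (((unitPart r p γ : ℚ) * ∏ i, (p i : ℚ) ^ (padicValRat (p i) γ) : ℚ) : ℝ) := by
    rw [this]
  push_cast at h
  exact h

lemma ds_bounds (hinj : Function.Injective p) {γ : ℚ} (hγ : γ ∈ PinvZ r p) (h0 : γ ≠ 0) {ψ : ℝ}
    (hψ0 : 0 ≤ ψ) (hψ : ψ ≤ 1 / (2 * LP r p γ)) :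
    dsdel p (unitPart r p γ) (dsnu p γ) ψ ≤ 1 / (2 * unitPart r p γ) ∧
    (∀ i, dsdelp p (dsnu p γ) ψ i ≤ 1) ∧ ψ ^ (r + 1) ≤ dsH (dsnu p γ) := by
  obtain ⟨-, -, hn0⟩ := ds_struct hinj hγ h0
  have habs := ds_abs hinj hγ h0
  have hp0 : ∀ i, (0 : ℝ) < p i := fun i => by exact_mod_cast (hpf i).out.pos
  set n := unitPart r p γ with hn
  set u := ∏ i, (p i : ℝ) ^ (dsnu p γ i) with hu
  have hupos : 0 < u := ds_u_pos _
  have hn1 : (1 : ℝ) ≤ n := by exact_mod_cast Nat.one_le_iff_ne_zero.2 hn0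
  have hprod : |(γ : ℝ)| * ∏ i, ‖(γ : ℚ_[p i])‖ = n := by
    rw [habs]
    simp_rw [ds_norm h0]
    rw [mul_assoc, hu, ← Finset.prod_mul_distrib]
    conv_rhs => rw [← mul_one (n : ℝ)]
    congr 1
    refine Finset.prod_eq_one fun i _ => ?_
    rw [dsnu, ← zpow_add₀ (hp0 i).ne']; simp
  have hL1 : 1 / u ≤ LP r p γ := by
    unfold LP
    rw [hprod, habs]
    refine le_trans (le_of_eq ?_) (le_max_left _ _)
    field_simp
  have hL2 : ∀ i, n * (p i : ℝ) ^ (dsnu p γ i) ≤ LP r p γ := by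
    intro i
    unfold LP
    rw [hprod]
    refine le_trans ?_ (le_max_right _ _)
    refine le_trans (le_of_eq ?_) (le_ciSup (Finite.bddAbove_range _) i)
    rw [ds_norm h0, zpow_neg, div_inv_eq_mul, dsnu]
  have hLpos : 0 < LP r p γ := lt_of_lt_of_le (by positivity) hL1
  have h2 : ψ * LP r p γ ≤ 1 / 2 := by
    rw [le_div_iff₀ (by positivity)] at hψ
    linarith
  have ha : ψ ≤ u / 2 := by
    have : ψ * (1 / u) ≤ 1 / 2 := (mul_le_mul_of_nonneg_left hL1 hψ0).trans h2
    rw [mul_one_div, div_le_iff₀ hupos] at this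
    linarith
  have hb : ∀ i, ψ * (p i : ℝ) ^ (dsnu p γ i) ≤ 1 := by
    intro i
    have h3 := (mul_le_mul_of_nonneg_left (hL2 i) hψ0).trans h2
    have h4 : (0 : ℝ) < (p i : ℝ) ^ (dsnu p γ i) := zpow_pos (hp0 i) _
    have h5 : 0 ≤ ψ * (p i : ℝ) ^ (dsnu p γ i) := by positivity
    nlinarith
  refine ⟨?_, hb, ?_⟩
  · rw [dsdel, div_le_div_iff₀ (by positivity) (by positivity)]
    have : (0 : ℝ) < n := by linarith
    rw [← hu]
    nlinarith
  · have hb' : ∀ i, ψ ≤ (p i : ℝ) ^ ((-dsnu p γ) i) := by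
      intro i
      have h4 : (0 : ℝ) < (p i : ℝ) ^ (dsnu p γ i) := zpow_pos (hp0 i) _
      rw [Pi.neg_apply, zpow_neg, ← one_div, le_div_iff₀ h4]
      exact hb i
    have hone : ψ ≤ 1 := by
      have : ψ ^ (r + 1) ≤ 1 := by
        calc ψ ^ (r + 1) = ψ * ∏ i : Fin r, ψ := by simp [pow_succ']
          _ ≤ u * ∏ i, (p i : ℝ) ^ ((-dsnu p γ) i) :=
            mul_le_mul (by linarith) (Finset.prod_le_prod (fun _ _ => hψ0) fun i _ => hb' i)
              (Finset.prod_nonneg fun _ _ => hψ0) hupos.le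
          _ = 1 := by
            rw [hu, ← Finset.prod_mul_distrib]
            refine Finset.prod_eq_one fun i _ => ?_
            rw [Pi.neg_apply, ← zpow_add₀ (hp0 i).ne']; simp
      exact (pow_le_one_iff_of_nonneg hψ0 (Nat.succ_ne_zero _)).1 this
    have := dsH_bound (p := p) (-dsnu p γ) (t0 := u) (by simp [hu])
    rw [dsH_neg] at this
    refine le_trans ?_ this
    calc ψ ^ (r + 1) = ψ * ∏ i : Fin r, ψ := by simp [pow_succ']
      _ ≤ _ := mul_le_mul (le_min hone (by linarith))
          (Finset.prod_le_prod (fun _ _ => hψ0) fun i _ => le_min hone (hb' i))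
          (Finset.prod_nonneg fun _ _ => hψ0) (le_min zero_le_one hupos.le)

lemma ds_pair (hinj : Function.Injective p) {γ : ℚ} (hγ : γ ∈ PinvZ r p) (h0 : γ ≠ 0)
    (hn2 : 2 ≤ unitPart r p γ) {ψ : ℝ} {x : QP r p}
    (hx : x ∈ dsA p (unitPart r p γ) (dsdel p (unitPart r p γ) (dsnu p γ) ψ) (dsdelp p (dsnu p γ) ψ)) :
    ∃ β : ℚ, β ∈ PinvZ r p ∧ CoprimePair r p β γ ∧ dP r p (smulQ r p γ x) (iota r p β) < ψ := by
  obtain ⟨hst, hpn, hn0⟩ := ds_struct hinj hγ h0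
  have habs := ds_abs hinj hγ h0
  have hp0 : ∀ i, (0 : ℝ) < p i := fun i => by exact_mod_cast (hpf i).out.pos
  have hpq0 : ∀ i, (p i : ℚ) ≠ 0 := fun i => by exact_mod_cast (hpf i).out.ne_zero
  set n := unitPart r p γ with hn
  have habspos : 0 < |(γ : ℝ)| := by
    rw [abs_pos]; exact_mod_cast h0
  rw [mem_dsA] at hx
  obtain ⟨b, ⟨m, K, hm, hb⟩, h1, h2⟩ := hx
  have hm0 : m ≠ 0 := by
    rintro rfl
    rw [isCoprime_zero_left, Int.isUnit_iff] at hm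
    omega
  obtain ⟨y, hy1, hy2⟩ := ds_strip hinj (Int.natAbs_ne_zero.2 hm0)
  set f := fun i => m.natAbs.factorization (p i) with hf
  obtain ⟨s, hs, hms⟩ : ∃ s : ℤ, IsUnit s ∧ m = s * y * ∏ i, (p i : ℤ) ^ f i := by
    rcases Int.natAbs_eq m with h | h
    · refine ⟨1, isUnit_one, ?_⟩
      rw [h, hy1]; push_cast; rw [one_mul]
    · refine ⟨-1, isUnit_one.neg, ?_⟩
      rw [h, hy1]; push_cast; ring
  obtain ⟨t, ht, hγt⟩ : ∃ t : ℤ, IsUnit t ∧ γ = (t * n : ℤ) * ∏ i, (p i : ℚ) ^ (dsnu p γ i) := by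
    rcases abs_choice γ with h | h
    · refine ⟨1, isUnit_one, ?_⟩
      rw [← h]
      conv_lhs => rw [hst]
      rw [h]; push_cast; rw [one_mul]; rfl
    · refine ⟨-1, isUnit_one.neg, ?_⟩
      have h : γ = -|γ| := by rw [h, neg_neg]
      conv_lhs => rw [h, hst]
      push_cast; rw [neg_one_mul, neg_mul]; rfl
  have hβ : b * γ = ((t * s * y : ℤ) : ℚ) * ∏ i, (p i : ℚ) ^ ((f i : ℤ) + dsnu p γ i - K) := by
    have e1 : ∏ i, (p i : ℚ) ^ ((f i : ℤ) + dsnu p γ i - K) =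
        (∏ i, (p i : ℚ) ^ f i) * (∏ i, (p i : ℚ) ^ (dsnu p γ i)) / (dsD p : ℚ) ^ K := by
      rw [dsD]; push_cast
      rw [← Finset.prod_pow, ← Finset.prod_mul_distrib, ← Finset.prod_div_distrib]
      refine Finset.prod_congr rfl fun i _ => ?_
      rw [zpow_sub₀ (hpq0 i), zpow_add₀ (hpq0 i), zpow_natCast, zpow_natCast]
    have hD : (dsD p : ℚ) ≠ 0 := by exact_mod_cast dsD_pos.ne'
    have hnq : (n : ℚ) ≠ 0 := by exact_mod_cast hn0
    rw [e1, hb, hms]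
    conv_lhs => rw [hγt]
    push_cast
    field_simp
  refine ⟨b * γ, ⟨_, _, hβ⟩, ⟨t * s * y, t * n, _, _, hβ, hγt, ?_, ?_, ?_⟩, ?_⟩
  · intro i h
    rw [(ht.mul hs).dvd_mul_left] at h
    exact hy2 i (by exact_mod_cast h)
  · intro i h
    rw [ht.dvd_mul_left] at h
    exact hpn i (by exact_mod_cast h)
  · rw [isCoprime_mul_unit_left_left (ht.mul hs), isCoprime_mul_unit_left_right ht]
    rw [hms] at hm
    have := hm.of_mul_left_left
    rwa [isCoprime_mul_unit_left_left hs] at this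
  · have hψ : 0 < ψ := by
      have : 0 < dsdel p n (dsnu p γ) ψ := lt_of_le_of_lt (abs_nonneg _) h1
      rw [dsdel, ← habs] at this
      exact (div_pos_iff_of_pos_right habspos).1 this
    unfold dP
    refine max_lt ?_ ?_
    · simp only [smulQ, iota]
      rw [Rat.cast_mul, mul_comm (b : ℝ), ← mul_sub, abs_mul]
      rw [dsdel, ← habs, lt_div_iff₀ habspos] at h1
      linarith
    · rcases isEmpty_or_nonempty (Fin r) with h | h
      · rw [Real.iSup_of_isEmpty]; exact hψ
      · obtain ⟨i, hi⟩ := exists_eq_ciSup_of_finite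
          (f := fun i => ‖(smulQ r p γ x).2 i - (iota r p (b * γ)).2 i‖)
        rw [← hi]
        simp only [smulQ, iota]
        rw [Rat.cast_mul, mul_comm (b : ℚ_[p i]), ← mul_sub, norm_mul, ds_norm h0, zpow_neg]
        have h3 := h2 i
        have h4 : (0 : ℝ) < (p i : ℝ) ^ (dsnu p γ i) := zpow_pos (hp0 i) _
        rw [dsdelp] at h3
        show ((p i : ℝ) ^ (dsnu p γ i))⁻¹ * _ < ψ
        rw [inv_mul_lt_iff₀ h4, mul_comm]
        exact h3

end DSStruct

section DSFinal

open Topology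

lemma ds_claimA {P : Set ℚ} {lv a w : ℚ → ℝ} (ha : ∀ γ, 0 ≤ a γ) (haw : ∀ γ, a γ ≤ w γ)
    (hdiv : ∑' γ : P, ENNReal.ofReal (a γ) = ⊤)
    (hlimsup : 0 < Filter.limsup (fun N : ℕ =>
        (∑' γ : {q : ℚ // q ∈ P ∧ lv q ≤ (N : ℝ)}, a γ) /
        (∑' γ : {q : ℚ // q ∈ P ∧ lv q ≤ (N : ℝ)}, w γ)) Filter.atTop) :
    ∃ c : ℝ, 0 < c ∧
      ∑' γ : {γ | γ ∈ P ∧ c * w γ ≤ a γ ∧ 0 < a γ}, ENNReal.ofReal (w γ) = ⊤ := by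
  have hw : ∀ γ, 0 ≤ w γ := fun γ => (ha γ).trans (haw γ)
  obtain ⟨L, hL0, hL⟩ := exists_between hlimsup
  have hfr := frequently_lt_of_lt_limsup (isCoboundedUnder_le_of_le atTop (x := 0) fun N =>
    div_nonneg (tsum_nonneg fun γ => ha _) (tsum_nonneg fun γ => hw _)) hL
  refine ⟨L / 2, half_pos hL0, ?_⟩
  set c := L / 2 with hcdef
  have hc : 0 < c := half_pos hL0
  set S : Set ℚ := {γ | γ ∈ P ∧ c * w γ ≤ a γ ∧ 0 < a γ} with hS
  by_contra hB
  set B := ∑' γ : S, ENNReal.ofReal (w γ) with hBdef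
  have hfr2 : ∃ᶠ N : ℕ in atTop,
      ∑' γ : {q : ℚ | q ∈ P ∧ lv q ≤ (N : ℝ)}, ENNReal.ofReal (a γ) ≤ 2 * B := by
    refine hfr.mono fun N hN => ?_
    set Q : Set ℚ := {q : ℚ | q ∈ P ∧ lv q ≤ (N : ℝ)} with hQ
    have hNN : L < (∑' γ : Q, a γ) / (∑' γ : Q, w γ) := hN
    have hsa : Summable fun γ : Q => a γ := by
      by_contra h
      rw [tsum_eq_zero_of_not_summable h, zero_div] at hNN
      linarith
    have hsw : Summable fun γ : Q => w γ := by
      by_contra h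
      rw [tsum_eq_zero_of_not_summable h, div_zero] at hNN
      linarith
    set α := ∑' γ : Q, a γ with hα
    set β := ∑' γ : Q, w γ with hβ
    have hβ0 : 0 ≤ β := tsum_nonneg fun γ => hw _
    have hα0 : 0 ≤ α := tsum_nonneg fun γ => ha _
    have hβpos : 0 < β := by
      rcases hβ0.lt_or_eq with h | h
      · exact h
      · rw [← h, div_zero] at hNN; linarith
    rw [lt_div_iff₀ hβpos] at hNN
    rw [← ENNReal.ofReal_tsum_of_nonneg (fun γ => ha _) hsa, ← hα]
    have h1 : ENNReal.ofReal α ≤ B + ENNReal.ofReal c * ENNReal.ofReal β := by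
      rw [hα, hβ, ENNReal.ofReal_tsum_of_nonneg (fun γ => ha _) hsa,
        ENNReal.ofReal_tsum_of_nonneg (fun γ => hw _) hsw, hBdef,
        tsum_subtype Q (fun γ => ENNReal.ofReal (a γ)), tsum_subtype Q (fun γ => ENNReal.ofReal (w γ)),
        tsum_subtype S (fun γ => ENNReal.ofReal (w γ)), ← ENNReal.tsum_mul_left, ← ENNReal.tsum_add]
      refine ENNReal.tsum_le_tsum fun γ => ?_
      by_cases hγ : γ ∈ Q
      · rw [indicator_of_mem hγ, indicator_of_mem hγ]
        by_cases hγS : γ ∈ S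
        · rw [indicator_of_mem hγS]
          exact le_add_right (ENNReal.ofReal_le_ofReal (haw γ))
        · rw [indicator_of_notMem hγS, zero_add, ← ENNReal.ofReal_mul hc.le]
          apply ENNReal.ofReal_le_ofReal
          by_contra hlt
          push Not at hlt
          exact hγS ⟨hγ.1, hlt.le, lt_of_le_of_lt (mul_nonneg hc.le (hw γ)) hlt⟩
      · rw [indicator_of_notMem hγ]; exact zero_le
    have hBr : B = ENNReal.ofReal B.toReal := (ENNReal.ofReal_toReal hB).symm
    have hB0 : 0 ≤ B.toReal := ENNReal.toReal_nonneg
    rw [hBr, ← ENNReal.ofReal_mul hc.le, ← ENNReal.ofReal_add hB0 (by positivity),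
      ENNReal.ofReal_le_ofReal_iff (by positivity)] at h1
    rw [hBr, show (2 : ENNReal) = ENNReal.ofReal 2 by simp, ← ENNReal.ofReal_mul (by norm_num)]
    apply ENNReal.ofReal_le_ofReal
    have : c * β < α / 2 := by rw [hcdef]; linarith
    linarith
  have htop : ∑' γ : P, ENNReal.ofReal (a γ) ≤ 2 * B := by
    rw [ENNReal.tsum_eq_iSup_sum]
    refine iSup_le fun s => ?_
    obtain ⟨M, hM⟩ : ∃ M : ℕ, ∀ γ ∈ s, lv γ ≤ M := by
      obtain ⟨x, hx⟩ := (s.finite_toSet.image fun γ : P => lv γ).bddAbove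
      obtain ⟨M, hM⟩ := exists_nat_ge x
      exact ⟨M, fun γ hγ => (hx ⟨γ, hγ, rfl⟩).trans hM⟩
    obtain ⟨N, hN, hNM⟩ := (hfr2.and_eventually (eventually_ge_atTop M)).exists
    refine le_trans ?_ hN
    have h1 : ∑ γ ∈ s, ENNReal.ofReal (a γ) =
        ∑ γ ∈ s.map (Function.Embedding.subtype _), ENNReal.ofReal (a γ) := by
      rw [Finset.sum_map]; rfl
    rw [h1, tsum_subtype _ (fun γ => ENNReal.ofReal (a γ))]
    refine le_trans (le_of_eq ?_) (ENNReal.sum_le_tsum (s.map (Function.Embedding.subtype _)))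
    refine Finset.sum_congr rfl fun γ hγ => ?_
    rw [indicator_of_mem]
    simp only [Finset.mem_map, Function.Embedding.subtype_apply] at hγ
    obtain ⟨g, hg, rfl⟩ := hγ
    exact ⟨g.2, (hM g hg).trans (by exact_mod_cast hNM)⟩
  rw [hdiv, top_le_iff] at htop
  exact ENNReal.mul_ne_top (by simp) hB htop

lemma ds_claimB {r : ℕ} (p : Fin r → ℕ) [hpf : ∀ i, Fact (p i).Prime] {c : ℝ} (hc : 0 < c) :
    ∃ Q : Finset ℕ, (∀ q ∈ Q, q.Prime ∧ ∀ i, ¬ p i ∣ q) ∧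
      ∀ n : ℕ, n ≠ 0 → c * n ≤ Nat.totient n → ∃ q ∈ Q, ¬ q ∣ n := by
  classical
  set f : ℕ → ℝ := indicator {q | q.Prime ∧ q ∉ range p} (fun n : ℕ => (1 : ℝ) / n) with hf
  have hns : ¬ Summable f := by
    intro h
    refine not_summable_one_div_on_primes (h.congr_cofinite ?_)
    have hfin : (range p).Finite := finite_range p
    filter_upwards [hfin.compl_mem_cofinite] with q hq
    by_cases hqp : q.Prime
    · rw [hf, indicator_of_mem (show q ∈ {q | q.Prime ∧ q ∉ range p} from ⟨hqp, hq⟩),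
        indicator_of_mem (show q ∈ {q | q.Prime} from hqp)]
    · rw [hf, indicator_of_notMem (fun h => hqp h.1), indicator_of_notMem (show q ∉ {q | q.Prime} from hqp)]
  have hf0 : ∀ n, 0 ≤ f n := fun n => indicator_nonneg (fun _ _ => by positivity) n
  rw [not_summable_iff_tendsto_nat_atTop_of_nonneg hf0] at hns
  obtain ⟨M, hM⟩ := (hns.eventually (eventually_gt_atTop (-Real.log c))).exists
  refine ⟨(Finset.range M).filter fun q => q.Prime ∧ q ∉ range p, ?_, ?_⟩
  · intro q hq
    rw [Finset.mem_filter] at hq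
    refine ⟨hq.2.1, fun i hi => hq.2.2 ⟨i, ?_⟩⟩
    exact (Nat.prime_dvd_prime_iff_eq (hpf i).out hq.2.1).1 hi
  · intro n hn hφ
    by_contra hcon
    push Not at hcon
    set Q := (Finset.range M).filter fun q => q.Prime ∧ q ∉ range p with hQ
    have hsub : Q ⊆ n.primeFactors := fun q hq =>
      Nat.mem_primeFactors.2 ⟨(Finset.mem_filter.1 hq).2.1, hcon q hq, hn⟩
    have hn0 : (0 : ℝ) < n := by exact_mod_cast Nat.pos_of_ne_zero hn
    have h1 : (Nat.totient n : ℝ) = n * ∏ q ∈ n.primeFactors, (1 - (q : ℝ)⁻¹) := by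
      have := Nat.totient_eq_mul_prod_factors n
      have h2 : ((Nat.totient n : ℚ) : ℝ) = ((n * ∏ q ∈ n.primeFactors, (1 - (q : ℚ)⁻¹) : ℚ) : ℝ) := by
        rw [this]
      push_cast at h2
      exact h2
    have hle1 : ∀ q ∈ n.primeFactors, 0 ≤ 1 - (q : ℝ)⁻¹ := by
      intro q hq
      have : (1 : ℝ) ≤ q := by exact_mod_cast (Nat.prime_of_mem_primeFactors hq).one_le
      rw [sub_nonneg]; exact inv_le_one_of_one_le₀ this
    have h2 : ∏ q ∈ n.primeFactors, (1 - (q : ℝ)⁻¹) ≤ ∏ q ∈ Q, (1 - (q : ℝ)⁻¹) := by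
      refine Finset.prod_le_prod_of_subset_of_le_one hsub hle1 fun q _ _ => ?_
      have : (0 : ℝ) ≤ (q : ℝ)⁻¹ := by positivity
      linarith
    have h3 : ∏ q ∈ Q, (1 - (q : ℝ)⁻¹) ≤ Real.exp (- ∑ q ∈ Q, (q : ℝ)⁻¹) := by
      rw [← Finset.sum_neg_distrib, Real.exp_sum]
      refine Finset.prod_le_prod (fun q hq => hle1 q (hsub hq)) fun q _ => ?_
      have := Real.add_one_le_exp (-(q : ℝ)⁻¹)
      linarith
    have h4 : ∑ q ∈ Q, (q : ℝ)⁻¹ = ∑ q ∈ Finset.range M, f q := by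
      rw [hQ, Finset.sum_filter]
      refine Finset.sum_congr rfl fun q _ => ?_
      rw [hf, indicator_apply]
      simp only [mem_ofPred_eq, one_div]
    have h5 : Real.exp (- ∑ q ∈ Q, (q : ℝ)⁻¹) < c := by
      rw [h4, ← Real.lt_log_iff_exp_lt hc]; linarith
    have h6 : c ≤ ∏ q ∈ n.primeFactors, (1 - (q : ℝ)⁻¹) := by
      rw [h1, mul_comm] at hφ
      exact le_of_mul_le_mul_left hφ hn0
    linarith

end DSFinal

section DSFinal2

open Topology

lemma ds_tail {F : Set ℚ} {W : ℚ → ENNReal} (hF : ∑' γ : F, W γ ≠ ⊤) {ε : ENNReal} (hε : 0 < ε) :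
    ∃ s : Finset ℚ, ∑' γ : (F \ (s : Set ℚ) : Set ℚ), W γ ≤ ε := by
  rw [tsum_subtype F W] at hF
  have h := ENNReal.tendsto_tsum_compl_atTop_zero hF
  obtain ⟨s, hs⟩ := (h.eventually (gt_mem_nhds hε)).exists
  refine ⟨s, le_trans (le_of_eq ?_) hs.le⟩
  have h2 : ∑' b : {x // x ∉ s}, F.indicator W b = ∑' b : ((s : Set ℚ)ᶜ : Set ℚ), F.indicator W b := rfl
  rw [h2, tsum_subtype ((s : Set ℚ)ᶜ) (F.indicator W), tsum_subtype, indicator_indicator,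
    sdiff_eq, inter_comm]

lemma ds_select {S : Set ℚ} {W : ℚ → ENNReal} (htop : ∑' γ : S, W γ = ⊤) (u : ℚ → ℕ)
    (hfib : ∀ n, ∑' γ : {γ | γ ∈ S ∧ u γ = n}, W γ ≠ ⊤) :
    ∃ J ⊆ S, (∀ γ ∈ J, 2 ≤ u γ) ∧ ∑' γ : J, W γ = ⊤ ∧ ∀ n, {γ | γ ∈ J ∧ u γ = n}.Finite := by
  have h1 : ∀ n : ℕ, (0 : ENNReal) < 2⁻¹ ^ n := fun n => ENNReal.pow_pos (by simp) n
  choose s hs using fun n => ds_tail (hfib n) (h1 n)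
  set F : ℕ → Set ℚ := fun n => {γ | γ ∈ S ∧ u γ = n} with hF
  set J : Set ℚ := {γ | γ ∈ S ∧ γ ∈ s (u γ) ∧ 2 ≤ u γ} with hJ
  refine ⟨J, fun γ h => h.1, fun γ h => h.2.2, ?_, fun n => ?_⟩
  · by_contra hne
    have hsub : S ⊆ (J ∪ (F 0 ∪ F 1)) ∪ ⋃ n, (F n \ (s n : Set ℚ)) := by
      intro γ hγ
      by_cases hγs : γ ∈ s (u γ)
      · left
        by_cases h2 : 2 ≤ u γ
        · exact Or.inl ⟨hγ, hγs, h2⟩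
        · right
          have : u γ = 0 ∨ u γ = 1 := by omega
          rcases this with h | h
          · exact Or.inl ⟨hγ, h⟩
          · exact Or.inr ⟨hγ, h⟩
      · right
        exact mem_iUnion.2 ⟨u γ, ⟨hγ, rfl⟩, hγs⟩
    have h2 := ENNReal.tsum_mono_subtype W hsub
    rw [htop, top_le_iff] at h2
    refine absurd h2 (ne_top_of_le_ne_top ?_ (ENNReal.tsum_union_le W _ _))
    refine ENNReal.add_ne_top.2 ⟨ne_top_of_le_ne_top ?_ (ENNReal.tsum_union_le W _ _),
      ne_top_of_le_ne_top ?_ (ENNReal.tsum_iUnion_le_tsum W _)⟩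
    · refine ENNReal.add_ne_top.2 ⟨hne, ne_top_of_le_ne_top ?_ (ENNReal.tsum_union_le W _ _)⟩
      exact ENNReal.add_ne_top.2 ⟨hfib 0, hfib 1⟩
    · refine ne_top_of_le_ne_top ?_ (ENNReal.tsum_le_tsum hs)
      rw [ENNReal.tsum_geometric]
      simp
  · refine (s n).finite_toSet.subset ?_
    rintro γ ⟨hγ, rfl⟩
    exact hγ.2.1

variable {r : ℕ} {p : Fin r → ℕ} [hpf : ∀ i, Fact (p i).Prime]

lemma ds_absinj (hinj : Function.Injective p) {γ γ' : ℚ} (hγ : γ ∈ PinvZ r p) (h0 : γ ≠ 0)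
    (hγ' : γ' ∈ PinvZ r p) (h0' : γ' ≠ 0) (hu : unitPart r p γ = unitPart r p γ')
    (hν : dsnu p γ = dsnu p γ') : |γ| = |γ'| := by
  rw [(ds_struct hinj hγ h0).1, (ds_struct hinj hγ' h0').1, hu]
  congr 1
  refine Finset.prod_congr rfl fun i _ => ?_
  rw [show padicValRat (p i) γ = padicValRat (p i) γ' from congrFun hν i]

lemma ds_fib (hinj : Function.Injective p) {ψ : ℚ → ℝ} (hψ0 : ∀ γ, 0 ≤ ψ γ)
    (hψL : ∀ γ, ψ γ ≤ 1 / (2 * LP r p γ)) {S : Set ℚ} (hS : S ⊆ PinvZ r p) (hS0 : ∀ γ ∈ S, γ ≠ 0)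
    (hSabs : ∀ γ ∈ S, ∀ γ' ∈ S, |γ| = |γ'| → γ = γ') (n : ℕ) :
    ∑' γ : {γ | γ ∈ S ∧ unitPart r p γ = n}, ENNReal.ofReal (ψ γ ^ (r + 1)) ≠ ⊤ := by
  classical
  obtain ⟨C, hC0, hC⟩ := dsH_sum r
  refine ne_top_of_le_ne_top (b := ENNReal.ofReal C) ENNReal.ofReal_ne_top ?_
  rw [ENNReal.tsum_eq_iSup_sum]
  refine iSup_le fun s => ?_
  rw [← ENNReal.ofReal_sum_of_nonneg fun γ _ => pow_nonneg (hψ0 _) _]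
  apply ENNReal.ofReal_le_ofReal
  calc ∑ γ ∈ s, ψ γ ^ (r + 1) ≤ ∑ γ ∈ s, dsH (dsnu p (γ : ℚ)) :=
        Finset.sum_le_sum fun γ _ =>
          (ds_bounds hinj (hS γ.2.1) (hS0 _ γ.2.1) (hψ0 _) (hψL _)).2.2
    _ = ∑ k ∈ s.image (fun γ : {γ | γ ∈ S ∧ unitPart r p γ = n} => dsnu p (γ : ℚ)), dsH k := by
        rw [Finset.sum_image]
        intro x _ y _ hxy
        apply Subtype.ext
        exact hSabs _ x.2.1 _ y.2.1 (ds_absinj hinj (hS x.2.1) (hS0 _ x.2.1) (hS y.2.1)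
          (hS0 _ y.2.1) (x.2.2.trans y.2.2.symm) hxy)
    _ ≤ C := hC _

lemma ds_main (hinj : Function.Injective p)
    (ψ : ℚ → ℝ) (hψ0 : ∀ γ, 0 ≤ ψ γ) (hψL : ∀ γ, ψ γ ≤ 1 / (2 * LP r p γ))
    (hdiv : ∑' γ : (PinvZ r p), ENNReal.ofReal (dsWeight r p ψ γ) = ⊤)
    (hlimsup : 0 < Filter.limsup (fun N : ℕ =>
        (∑' γ : {q : ℚ // q ∈ PinvZ r p ∧ lev r p q ≤ (N : ℝ)}, dsWeight r p ψ γ) /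
        (∑' γ : {q : ℚ // q ∈ PinvZ r p ∧ lev r p q ≤ (N : ℝ)}, ψ γ ^ (r + 1)))
      Filter.atTop) :
    lamP r p (Apsi r p ψ) = 1 := by
  classical
  have hw0 : ∀ γ, 0 ≤ ψ γ ^ (r + 1) := fun γ => pow_nonneg (hψ0 γ) _
  have ha0 : ∀ γ, 0 ≤ dsWeight r p ψ γ := fun γ => by
    unfold dsWeight
    exact div_nonneg (mul_nonneg (by positivity) (hw0 γ)) (by positivity)
  have haw : ∀ γ, dsWeight r p ψ γ ≤ ψ γ ^ (r + 1) := fun γ => by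
    unfold dsWeight
    refine div_le_of_le_mul₀ (by positivity) (hw0 γ) ?_
    rw [mul_comm]
    exact mul_le_mul_of_nonneg_left (by exact_mod_cast Nat.totient_le _) (hw0 γ)
  obtain ⟨c, hc, htop⟩ := ds_claimA (w := fun γ => ψ γ ^ (r + 1)) ha0 haw hdiv hlimsup
  set S1 : Set ℚ := {γ | γ ∈ PinvZ r p ∧ c * ψ γ ^ (r + 1) ≤ dsWeight r p ψ γ ∧
    0 < dsWeight r p ψ γ} with hS1
  set W : ℚ → ENNReal := fun γ => ENNReal.ofReal (ψ γ ^ (r + 1)) with hW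
  have hS1u : ∀ γ ∈ S1, unitPart r p γ ≠ 0 := by
    rintro γ ⟨-, -, h⟩ h0
    unfold dsWeight at h
    simp [h0] at h
  have hS10 : ∀ γ ∈ S1, γ ≠ 0 := by
    intro γ hγ h0
    apply hS1u γ hγ
    rw [h0]; simp [unitPart]
  have hS1ψ : ∀ γ ∈ S1, 0 < ψ γ := by
    rintro γ ⟨-, -, h⟩
    rcases (hψ0 γ).lt_or_eq with h1 | h1
    · exact h1
    · have := haw γ
      rw [← h1, zero_pow (by omega)] at this
      linarith
  have hS1φ : ∀ γ ∈ S1, c * unitPart r p γ ≤ Nat.totient (unitPart r p γ) := by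
    intro γ hγ
    have hn : (0 : ℝ) < unitPart r p γ := by exact_mod_cast Nat.pos_of_ne_zero (hS1u γ hγ)
    have hw : 0 < ψ γ ^ (r + 1) := pow_pos (hS1ψ γ hγ) _
    have h := hγ.2.1
    unfold dsWeight at h
    rw [le_div_iff₀ hn] at h
    refine le_of_mul_le_mul_right ?_ hw
    linarith
  obtain ⟨Q, hQ1, hQ2⟩ := ds_claimB p hc
  -- pigeonhole
  obtain ⟨q, hq, S, hSS, hSq, hSabs, hStop⟩ : ∃ q ∈ Q, ∃ S ⊆ S1, (∀ γ ∈ S, ¬ q ∣ unitPart r p γ) ∧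
      (∀ γ ∈ S, ∀ γ' ∈ S, |γ| = |γ'| → γ = γ') ∧ ∑' γ : S, W γ = ⊤ := by
    by_contra hcon
    push Not at hcon
    have hpos : ∀ q ∈ Q, ∑' γ : {γ | γ ∈ S1 ∧ ¬ q ∣ unitPart r p γ ∧ 0 < γ}, W γ ≠ ⊤ := fun q hq =>
      hcon q hq _ (fun γ h => h.1) (fun γ h => h.2.1) fun γ h γ' h' e => by
        rwa [abs_of_pos h.2.2, abs_of_pos h'.2.2] at e
    have hneg : ∀ q ∈ Q, ∑' γ : {γ | γ ∈ S1 ∧ ¬ q ∣ unitPart r p γ ∧ γ < 0}, W γ ≠ ⊤ := fun q hq =>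
      hcon q hq _ (fun γ h => h.1) (fun γ h => h.2.1) fun γ h γ' h' e => by
        rwa [abs_of_neg h.2.2, abs_of_neg h'.2.2, neg_inj] at e
    have hsub : S1 ⊆ ⋃ q ∈ Q, ({γ | γ ∈ S1 ∧ ¬ q ∣ unitPart r p γ ∧ 0 < γ} ∪
        {γ | γ ∈ S1 ∧ ¬ q ∣ unitPart r p γ ∧ γ < 0}) := by
      intro γ hγ
      obtain ⟨q, hq, hqn⟩ := hQ2 _ (hS1u γ hγ) (hS1φ γ hγ)
      refine mem_iUnion₂.2 ⟨q, hq, ?_⟩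
      rcases lt_or_gt_of_ne (hS10 γ hγ) with h | h
      · exact Or.inr ⟨hγ, hqn, h⟩
      · exact Or.inl ⟨hγ, hqn, h⟩
    have h2 := ENNReal.tsum_mono_subtype W hsub
    have h3 : ∑' γ : S1, W γ = ⊤ := htop
    rw [h3, top_le_iff] at h2
    refine absurd h2 (ne_top_of_le_ne_top ?_ (ENNReal.tsum_biUnion_le W _ _))
    refine ENNReal.sum_ne_top.2 fun q hq => ne_top_of_le_ne_top ?_ (ENNReal.tsum_union_le W _ _)
    exact ENNReal.add_ne_top.2 ⟨hpos q hq, hneg q hq⟩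
  obtain ⟨J, hJS, hJ2, hJtop, hJfin⟩ := ds_select hStop (unitPart r p)
    (ds_fib hinj hψ0 hψL (fun γ h => (hSS h).1) (fun γ h => hS10 γ (hSS h)) hSabs)
  have hJ1 : J ⊆ S1 := hJS.trans hSS
  have hJinf : Infinite J := by
    by_contra h
    rw [not_infinite_iff_finite] at h
    have := Fintype.ofFinite J
    rw [tsum_fintype] at hJtop
    exact ENNReal.sum_ne_top.2 (fun γ _ => ENNReal.ofReal_ne_top) hJtop
  obtain ⟨e⟩ : Nonempty (ℕ ≃ J) := by
    have : Encodable J := Encodable.ofCountable J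
    have : Denumerable J := Denumerable.ofEncodableOfInfinite J
    exact ⟨(Denumerable.eqv J).symm⟩
  have hbd : ∀ k, _ := fun k => ds_bounds hinj (hJ1 (e k).2).1 (hS10 _ (hJ1 (e k).2))
    (hψ0 (e k : ℚ)) (hψL (e k : ℚ))
  have hst : ∀ k, _ := fun k => ds_struct hinj (hJ1 (e k).2).1 (hS10 _ (hJ1 (e k).2))
  set n : ℕ → ℕ := fun k => unitPart r p (e k : ℚ) with hn
  set ν : ℕ → Fin r → ℤ := fun k => dsnu p (e k : ℚ) with hν
  set Ψ : ℕ → ℝ := fun k => ψ (e k : ℚ) with hΨ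
  have hcore := ds_core (n := n) (ν := ν) (ψ := Ψ) hinj
    (fun k l h1 h2 => e.injective (Subtype.ext (hSabs _ (hJS (e k).2) _ (hJS (e l).2)
      (ds_absinj hinj (hJ1 (e k).2).1 (hS10 _ (hJ1 (e k).2)) (hJ1 (e l).2).1
        (hS10 _ (hJ1 (e l).2)) h1 h2))))
    (fun k => hS1ψ _ (hJ1 (e k).2)) (fun k => (hst k).2.1) (fun k => hJ2 _ (e k).2) hc
    (fun k => hS1φ _ (hJ1 (e k).2)) (fun k => (hbd k).1) (fun k => (hbd k).2.1) (by
      intro hs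
      have h1 := ENNReal.ofReal_tsum_of_nonneg (fun k => hw0 (e k : ℚ)) hs
      have h2 : ∑' k, ENNReal.ofReal (ψ (e k : ℚ) ^ (r + 1)) = ∑' γ : J, W γ :=
        e.tsum_eq (fun γ : J => W γ)
      rw [h2, hJtop] at h1
      exact ENNReal.ofReal_ne_top h1)
  have hntop : Tendsto n atTop atTop := by
    refine tendsto_atTop.2 fun M => ?_
    rw [← Nat.cofinite_eq_atTop]
    have hfin : {k | n k < M}.Finite := by
      have h1 : {k | n k < M} ⊆ (fun k => (e k : ℚ)) ⁻¹' ⋃ m ∈ Finset.range M,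
          {γ | γ ∈ J ∧ unitPart r p γ = m} := by
        intro k hk
        exact mem_iUnion₂.2 ⟨n k, Finset.mem_range.2 hk, (e k).2, rfl⟩
      refine Finite.subset (Finite.preimage ?_ ?_) h1
      · exact (Subtype.val_injective.comp e.injective).injOn
      · exact (Finset.range M).finite_toSet.biUnion fun m _ => hJfin m
    filter_upwards [hfin.compl_mem_cofinite] with k hk
    exact not_lt.1 hk
  have hδ : Tendsto (fun k => dsdel p (n k) (ν k) (Ψ k)) atTop (𝓝 0) := by
    have h1 : Tendsto (fun k => 1 / (2 * (n k : ℝ))) atTop (𝓝 0) := by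
      refine Tendsto.div_atTop tendsto_const_nhds ?_
      exact (tendsto_natCast_atTop_atTop.comp hntop).const_mul_atTop (by norm_num)
    refine tendsto_of_tendsto_of_tendsto_of_le_of_le tendsto_const_nhds h1 (fun k => ?_)
      fun k => (hbd k).1
    unfold dsdel
    exact div_nonneg (hψ0 _) (by positivity)
  have hone := ds_zeroone hinj (n := n) (fun k => (hst k).2.1) (fun k => (hst k).2.2) hδ
    (hQ1 q hq).1 (hQ1 q hq).2 (fun k => hSq _ (hJS (e k).2)) hcore
  refine le_antisymm ?_ ?_
  · calc lamP r p (Apsi r p ψ) ≤ lamP r p (ZP r p) := measure_mono fun x hx => hx.1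
      _ = 1 := ZP_meas
  · rw [← hone]
    refine measure_mono ?_
    rintro x ⟨hxZ, hxE⟩
    refine ⟨hxZ, fun hfin => ?_⟩
    have hxE2 : {k | x ∈ dsA p (n k) (dsdel p (n k) (ν k) (Ψ k)) (dsdelp p (ν k) (Ψ k))}.Infinite :=
      Nat.frequently_atTop_iff_infinite.1 hxE
    refine (hxE2.image (f := fun k => (e k : ℚ))
      (Subtype.val_injective.comp e.injective).injOn) ((hfin.image Prod.snd).subset ?_)
    rintro _ ⟨k, hk, rfl⟩
    obtain ⟨β, h1, h2, h3⟩ := ds_pair hinj (hJ1 (e k).2).1 (hS10 _ (hJ1 (e k).2)) (hJ2 _ (e k).2) hk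
    exact ⟨(β, (e k : ℚ)), ⟨h1, (hJ1 (e k).2).1, h2, h3⟩, rfl⟩

end DSFinal2

/-- **The diagonal Duffin–Schaeffer theorem.** If `ψ : P⁻¹ℤ → ℝ_{≥0}` satisfies
`ψ(γ) ≤ 1/(2L(γ))`, the series `Σ_γ φ(n)ψ(γ)^{r+1}/n` diverges, and
`limsup_N (Σ_{ℓ(γ)≤N} φ(n)ψ(γ)^{r+1}/n) / (Σ_{ℓ(γ)≤N} ψ(γ)^{r+1}) > 0`,
then `λ(𝒜(ψ)) = 1`. -/
theorem diagonal_duffin_schaeffer (r : ℕ) (p : Fin r → ℕ)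
    [∀ i, Fact (p i).Prime] (hinj : Function.Injective p)
    (ψ : ℚ → ℝ) (hψ0 : ∀ γ, 0 ≤ ψ γ) (hψL : ∀ γ, ψ γ ≤ 1 / (2 * LP r p γ))
    (hdiv : ∑' γ : (PinvZ r p), ENNReal.ofReal (dsWeight r p ψ γ) = ⊤)
    (hlimsup : 0 < Filter.limsup (fun N : ℕ =>
        (∑' γ : {q : ℚ // q ∈ PinvZ r p ∧ lev r p q ≤ (N : ℝ)}, dsWeight r p ψ γ) /
        (∑' γ : {q : ℚ // q ∈ PinvZ r p ∧ lev r p q ≤ (N : ℝ)}, ψ γ ^ (r + 1)))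
      Filter.atTop) :
    lamP r p (Apsi r p ψ) = 1 := by
  exact ds_main hinj ψ hψ0 hψL hdiv hlimsup
end
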